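/- arXiv:2303.06971 — 12 statements merged into one kernel-verified Lean document; each statement's English description precedes it below -/
import Mathlib

section
/- Let H be a real symmetric invertible d×d matrix with exactly p negative eigenvalues (counted with multiplicity), and let L be a real d×d matrix such that H·L is antisymmetric. Then the characteristic polynomial of H + Lᵀ has, over ℂ and counted with algebraic multiplicity, exactly p roots with strictly negative real part and exactly d−p roots with strictly positive real part; in particular H + Lᵀ has no eigenvalue with zero real part. -/
/-!
Put `B = H + L`; since `H` is symmetric, `B` is the transpose of `H + Lᵀ` and has the same
characteristic polynomial. For the Hermitian form `h(x, y) = x* H y` on `ℂᵈ`,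
`Re h(x, B x) = ‖H x‖² + Re (x* H L x) = ‖H x‖² > 0` for `x ≠ 0`, as `H L` is antisymmetric
(`hermForm_pos`). On an eigenvector this reads `Re lam * h(x, x) > 0`, so no eigenvalue is
purely imaginary.

Splitting off one eigenvector at a time, together with its `h`-orthogonal complement, produces a
positive definite and a negative definite subspace of `h` whose dimensions are the numbers of
eigenvalues of `B` with positive and with negative real part (`exists_definite`). The case `L = 0`
gives such subspaces with the dimensions read off from the eigenvalues of `H` itself. A positive
definite subspace meets a negative definite one only in `0`, so comparing dimensions across the
two cases forces the counts to agree, as in Sylvester's law of inertia.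
-/

open Matrix Polynomial
open scoped Classical

/-! ### Lyapunov forms on complex vector spaces -/

/-- If `V = ℂ v ⊕ W` with `v` an eigenvector of `B`, and `B'` is the compression of `B` to `W`
along `v`, then `B` is block triangular and its characteristic polynomial factors. -/
lemma charpoly_eq_of_eigenvector {V : Type*} [AddCommGroup V] [Module ℂ V]
    [FiniteDimensional ℂ V] (B : Module.End ℂ V) (v : V) (lam : ℂ) (hv : B v = lam • v)
    (W : Submodule ℂ V) (B' : Module.End ℂ W) (c : W → ℂ)
    (hB : ∀ w : W, B w = c w • v + (B' w : V))
    (hdisj : ∀ a : ℂ, a • v ∈ W → a = 0)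
    (hspan : ∀ x : V, ∃ a : ℂ, ∃ w : W, x = a • v + (w : V)) :
    B.charpoly = (X - C lam) * B'.charpoly := by
  set ψ : (ℂ × W) →ₗ[ℂ] V := (LinearMap.toSpanSingleton ℂ V v).coprod W.subtype with hψ
  have hψa : ∀ z : ℂ × W, ψ z = z.1 • v + (z.2 : V) := by
    intro z; simp [hψ]
  have hbij : Function.Bijective ψ := by
    constructor
    · rw [← LinearMap.ker_eq_bot, LinearMap.ker_eq_bot']
      rintro ⟨a, w⟩ h
      rw [hψa] at h
      simp only at h
      have ha : a = 0 := by
        apply hdisj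
        rw [eq_neg_of_add_eq_zero_left h]
        exact W.neg_mem w.2
      subst ha
      simpa using h
    · intro x
      obtain ⟨a, w, rfl⟩ := hspan x
      exact ⟨(a, w), hψa _⟩
  let e := LinearEquiv.ofBijective ψ hbij
  have he : ∀ a : ℂ, ∀ w : W, e.symm (a • v + (w : V)) = (a, w) := by
    intro a w
    rw [LinearEquiv.symm_apply_eq]
    exact (hψa (a, w)).symm
  let bW := Module.finBasis ℂ W
  let b := (Module.Basis.singleton Unit ℂ).prod bW
  rw [← LinearEquiv.charpoly_conj e.symm B, ← LinearMap.charpoly_toMatrix _ b,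
    ← LinearMap.charpoly_toMatrix B' bW]
  have hM : LinearMap.toMatrix b b (e.symm.conj B) =
      fromBlocks (Matrix.of fun _ _ => lam) (Matrix.of fun _ j => c (bW j)) 0
        (LinearMap.toMatrix bW bW B') := by
    have h1 : e.symm.conj B (1, 0) = (lam, 0) := by
      have := he lam 0
      have h2 : e (1, 0) = v := (hψa (1, 0)).trans (by simp)
      simp only [LinearEquiv.conj_apply, LinearMap.comp_apply, LinearEquiv.coe_coe,
        LinearEquiv.symm_symm, h2, hv]
      simpa using this
    have h2 : ∀ w : W, e.symm.conj B (0, w) = (c w, B' w) := by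
      intro w
      have h2 : e (0, w) = (w : V) := (hψa (0, w)).trans (by simp)
      simp only [LinearEquiv.conj_apply, LinearMap.comp_apply, LinearEquiv.coe_coe,
        LinearEquiv.symm_symm, h2, hB, he]
    ext (i | i) (j | j) <;> simp [LinearMap.toMatrix_apply, b, h1, h2]
  rw [hM, charpoly_fromBlocks_zero₂₁]
  congr 1
  simp [Matrix.charpoly, Matrix.det_unique]

/-- If `B v = lam v` then `h(v, B v) = lam h(v, v)`, where
`h(v, v)` is real, so positivity of `Re h(v, B v)` ties the sign of `Re lam` to that of
`h(v, v)`. -/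
lemma re_mul_re_pos {V : Type*} [AddCommGroup V] [Module ℂ V]
    (h : V →ₗ⋆[ℂ] V →ₗ[ℂ] ℂ) (hh : ∀ x y, star (h x y) = h y x)
    (B : Module.End ℂ V) (hB : ∀ x, x ≠ 0 → 0 < (h x (B x)).re)
    {v : V} (hv0 : v ≠ 0) {lam : ℂ} (hv : B v = lam • v) :
    0 < lam.re * (h v v).re := by
  have h1 := hB v hv0
  have him : (h v v).im = 0 := by
    have := congrArg Complex.im (hh v v)
    simp at this
    linarith
  simpa [hv, Complex.mul_re, him] using h1

lemma re_ne_zero_of_root {V : Type*} [AddCommGroup V] [Module ℂ V] [FiniteDimensional ℂ V]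
    (h : V →ₗ⋆[ℂ] V →ₗ[ℂ] ℂ) (hh : ∀ x y, star (h x y) = h y x)
    (B : Module.End ℂ V) (hB : ∀ x, x ≠ 0 → 0 < (h x (B x)).re)
    {z : ℂ} (hz : z ∈ B.charpoly.roots) : z.re ≠ 0 := by
  have h1 := (Module.End.hasEigenvalue_iff_isRoot_charpoly B z).2 (isRoot_of_mem_roots hz)
  obtain ⟨v, hv⟩ := h1.exists_hasEigenvector
  have := re_mul_re_pos h hh B hB hv.2 hv.apply_eq_smul
  intro h0
  simp [h0] at this

/-- If `Re h(x, B x) > 0` for all `x ≠ 0`, there is a subspace on which the Hermitian form `s h`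
is positive definite, of dimension the number of eigenvalues of `B` with `s Re z > 0`. The proof
is by induction on the dimension, splitting off an eigenvector `v` of `B` and compressing `B` to
the `h`-orthogonal complement of `v`. The sign `s` is `1` or `-1` in applications. -/
lemma exists_definite (s : ℝ) (n : ℕ) : ∀ {V : Type} [AddCommGroup V] [Module ℂ V]
    [FiniteDimensional ℂ V] (h : V →ₗ⋆[ℂ] V →ₗ[ℂ] ℂ) (_ : ∀ x y, star (h x y) = h y x)
    (B : Module.End ℂ V) (_ : ∀ x, x ≠ 0 → 0 < (h x (B x)).re),
    Module.finrank ℂ V = n →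
    ∃ U : Submodule ℂ V, (∀ x ∈ U, x ≠ 0 → 0 < s * (h x x).re) ∧
      Module.finrank ℂ U = B.charpoly.roots.countP (fun z => 0 < s * z.re) := by
  induction n with
  | zero =>
    intro V _ _ _ h hh B hB hn
    refine ⟨⊥, ?_, ?_⟩
    · intro x hx hx0
      exact absurd ((Submodule.mem_bot ℂ).1 hx) hx0
    · have : B.charpoly.roots.card ≤ 0 := by
        have := card_roots' B.charpoly
        rwa [LinearMap.charpoly_natDegree, hn] at this
      rw [Multiset.card_eq_zero.1 (Nat.le_zero.1 this)]
      simp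
  | succ n ih =>
    intro V _ _ _ h hh B hB hn
    have : Nontrivial V := Module.nontrivial_of_finrank_pos (R := ℂ) (by omega)
    obtain ⟨lam, hlam⟩ := Module.End.exists_eigenvalue B
    obtain ⟨v, hv⟩ := hlam.exists_hasEigenvector
    have hv0 : v ≠ 0 := hv.2
    have hBv : B v = lam • v := hv.apply_eq_smul
    have hpos := re_mul_re_pos h hh B hB hv0 hBv
    have hvv : h v v ≠ 0 := by
      intro h0
      simp [h0] at hpos
    let W := LinearMap.ker (h v)
    have hW : ∀ w : W, h v w = 0 := fun w => w.2
    have hW' : ∀ w : W, h w v = 0 := fun w => by rw [← hh, hW, star_zero]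
    have hWn : Module.finrank ℂ W = n := by
      have := Module.Dual.finrank_ker_add_one_of_ne_zero (K := ℂ) (f := h v)
        (fun h0 => hvv (by rw [h0]; rfl))
      have h2 : Module.finrank ℂ W + 1 = Module.finrank ℂ V := this
      omega
    -- the projection onto `W` along `v`
    let P : V →ₗ[ℂ] W := LinearMap.codRestrict W
      (LinearMap.id - ((h v v)⁻¹ • h v).smulRight v) (fun x => by
        simp only [W, LinearMap.mem_ker]
        simp
        field_simp
        simp)
    have hP : ∀ x, (P x : V) = x - ((h v v)⁻¹ * h v x) • v := fun x => by simp [P]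
    let B' : Module.End ℂ W := P ∘ₗ B ∘ₗ W.subtype
    have hB' : ∀ w : W, (B' w : V) = B w - ((h v v)⁻¹ * h v (B w)) • v := fun w => hP _
    have hchar : B.charpoly = (X - C lam) * B'.charpoly := by
      refine charpoly_eq_of_eigenvector B v lam hBv W B' (fun w => (h v v)⁻¹ * h v (B w)) ?_ ?_ ?_
      · intro w
        rw [hB']; abel
      · intro a ha
        have : h v (a • v) = 0 := ha
        simpa [hvv] using this
      · intro x
        exact ⟨(h v v)⁻¹ * h v x, P x, by rw [hP]; abel⟩
    have hroots : B.charpoly.roots = lam ::ₘ B'.charpoly.roots := by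
      rw [hchar, roots_mul, roots_X_sub_C, Multiset.singleton_add]
      exact mul_ne_zero (X_sub_C_ne_zero _) (LinearMap.charpoly_monic _).ne_zero
    let h' : W →ₗ⋆[ℂ] W →ₗ[ℂ] ℂ := h.domRestrict₁₂ W W
    have hh' : ∀ x y : W, h' x y = h x y := fun x y => rfl
    obtain ⟨U, hU, hUn⟩ := ih h' (fun x y => hh x y) B' (fun w hw => by
      have h1 := hB w (by simpa using hw)
      rw [hh', hB']
      simpa [hW'] using h1) hWn
    have hUW : ∀ x ∈ U.map W.subtype, x ≠ 0 → 0 < s * (h x x).re := by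
      rintro _ ⟨u, hu, rfl⟩ hx
      exact hU u hu (by rintro rfl; exact hx (by simp))
    have hfr : Module.finrank ℂ (U.map W.subtype) = Module.finrank ℂ U :=
      LinearEquiv.finrank_eq (U.equivMapOfInjective _ W.injective_subtype) |>.symm
    rw [hroots]
    by_cases hs : 0 < s * lam.re
    · refine ⟨U.map W.subtype ⊔ Submodule.span ℂ {v}, ?_, ?_⟩
      · intro x hx hx0
        obtain ⟨_, ⟨u, hu, rfl⟩, y, hy, rfl⟩ := Submodule.mem_sup.1 hx
        obtain ⟨a, rfl⟩ := Submodule.mem_span_singleton.1 hy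
        have hexp : h (W.subtype u + a • v) (W.subtype u + a • v) =
            h u u + (Complex.normSq a : ℂ) * h v v := by
          have e1 := hW u
          have e2 := hW' u
          simp [e1, e2, Complex.normSq_eq_conj_mul_self, mul_assoc]
        -- `s * lam.re` and `lam.re * (h v v).re` are positive, hence so is `s * (h v v).re`
        have hsv : 0 < s * (h v v).re := by
          have h3 : 0 < (lam.re) ^ 2 * (s * (h v v).re) := by nlinarith [mul_pos hs hpos]
          exact pos_of_mul_pos_right h3 (sq_nonneg _)
        rw [hexp, Complex.add_re, Complex.re_ofReal_mul, mul_add]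
        have h2 : 0 ≤ s * (Complex.normSq a * (h v v).re) := by
          nlinarith [mul_nonneg (Complex.normSq_nonneg a) hsv.le]
        by_cases hu0 : u = 0
        · subst hu0
          have ha : a ≠ 0 := by
            rintro rfl; simp at hx0
          have := mul_pos (Complex.normSq_pos.2 ha) hsv
          simp only [ZeroMemClass.coe_zero, map_zero, Complex.zero_re, mul_zero, zero_add]
          linarith
        · exact add_pos_of_pos_of_nonneg (hU u hu hu0) h2
      · have hd : U.map W.subtype ⊓ Submodule.span ℂ {v} = ⊥ := by
          rw [eq_bot_iff]
          rintro _ ⟨⟨u, hu, rfl⟩, hx⟩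
          obtain ⟨a, ha⟩ := Submodule.mem_span_singleton.1 hx
          have h1 : h v (a • v) = 0 := by rw [ha]; exact hW u
          have h2 : a = 0 := by simpa [hvv] using h1
          rw [← ha, h2, zero_smul]
          exact Submodule.zero_mem _
        have h1 := Submodule.finrank_sup_add_finrank_inf_eq (U.map W.subtype)
          (Submodule.span ℂ {v})
        rw [hd, finrank_bot, finrank_span_singleton hv0, hfr, hUn, add_zero] at h1
        rw [Multiset.countP_cons_of_pos (p := fun z : ℂ => 0 < s * z.re) _ hs, h1]
    · refine ⟨U.map W.subtype, hUW, ?_⟩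
      rw [Multiset.countP_cons_of_neg (p := fun z : ℂ => 0 < s * z.re) _ hs, hfr, hUn]


/-! ### The form attached to a real matrix -/

/-- The sesquilinear form `h(x, y) = x* H y` on `ℂᵈ` attached to a real matrix `H`, conjugate-linear
in `x`; it is Hermitian when `H` is symmetric. -/
noncomputable def hermForm {d : ℕ} (H : Matrix (Fin d) (Fin d) ℝ) :
    (Fin d → ℂ) →ₗ⋆[ℂ] (Fin d → ℂ) →ₗ[ℂ] ℂ :=
  LinearMap.mk₂'ₛₗ (starRingEnd ℂ) (RingHom.id ℂ)
    (fun x y => star x ⬝ᵥ (H.map Complex.ofReal *ᵥ y))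
    (fun x y z => by simp [add_dotProduct])
    (fun c x y => by simp [smul_dotProduct])
    (fun x y z => by simp [mulVec_add, dotProduct_add])
    (fun c x y => by simp [mulVec_smul, dotProduct_smul])

lemma hermForm_apply {d : ℕ} (H : Matrix (Fin d) (Fin d) ℝ) (x y : Fin d → ℂ) :
    hermForm H x y = star x ⬝ᵥ (H.map Complex.ofReal *ᵥ y) := rfl

lemma star_hermForm {d : ℕ} (H : Matrix (Fin d) (Fin d) ℝ) (x y : Fin d → ℂ) :
    star (hermForm H x y) = hermForm Hᵀ y x := by
  have hc : (H.map Complex.ofReal)ᴴ = Hᵀ.map Complex.ofReal := by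
    ext i j; simp
  rw [hermForm_apply, hermForm_apply, ← star_dotProduct_star, star_star, star_mulVec, hc,
    ← dotProduct_mulVec]

open scoped ComplexOrder in
/-- The term `x* H K x` is purely imaginary since `H K` is antisymmetric, and the remaining
term `x* H H x` is `‖H x‖²`. -/
lemma hermForm_pos {d : ℕ} (H K : Matrix (Fin d) (Fin d) ℝ) (hH : H.IsSymm)
    (hHinv : IsUnit H.det) (hanti : (H * K)ᵀ = -(H * K)) (x : Fin d → ℂ) (hx : x ≠ 0) :
    0 < (hermForm H x (Matrix.toLin' ((H + K).map Complex.ofReal) x)).re := by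
  have hmul : ∀ M N : Matrix (Fin d) (Fin d) ℝ,
      (M * N).map Complex.ofReal = M.map Complex.ofReal * N.map Complex.ofReal :=
    fun M N => Matrix.map_mul (f := Complex.ofRealHom)
  have hsplit : hermForm H x (Matrix.toLin' ((H + K).map Complex.ofReal) x) =
      hermForm (H * H) x x + hermForm (H * K) x x := by
    have hadd : (H + K).map Complex.ofReal = H.map Complex.ofReal + K.map Complex.ofReal := by
      ext i j; simp
    simp only [hermForm_apply, hmul, hadd, Matrix.toLin'_apply, add_mulVec, mulVec_add,
      dotProduct_add, mulVec_mulVec]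
  have h1 : (hermForm (H * K) x x).re = 0 := by
    have h2 := congrArg Complex.re (star_hermForm (H * K) x x)
    have h3 : hermForm (-(H * K)) x x = - hermForm (H * K) x x := by
      have : (-(H * K)).map Complex.ofReal = -((H * K).map Complex.ofReal) := by
        ext i j; simp
      rw [hermForm_apply, hermForm_apply, this, neg_mulVec, dotProduct_neg]
    rw [hanti, h3] at h2
    simp at h2
    linarith
  have h2 : hermForm (H * H) x x =
      star (H.map Complex.ofReal *ᵥ x) ⬝ᵥ (H.map Complex.ofReal *ᵥ x) := by
    have hc : (H.map Complex.ofReal)ᴴ = H.map Complex.ofReal := by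
      ext i j; simp [hH.apply]
    rw [hermForm_apply, hmul, star_mulVec, hc, ← mulVec_mulVec, ← dotProduct_mulVec]
  have hdet : (H.map Complex.ofReal).det ≠ 0 := by
    have : (H.map Complex.ofReal).det = (H.det : ℂ) := (Complex.ofRealHom.map_det H).symm
    rw [this]
    exact_mod_cast hHinv.ne_zero
  have h4 : H.map Complex.ofReal *ᵥ x ≠ 0 :=
    fun h0 => hx (Matrix.eq_zero_of_mulVec_eq_zero hdet h0)
  have h5 := Matrix.dotProduct_star_self_pos_iff.2 h4
  rw [hsplit, Complex.add_re, h1, add_zero, h2]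
  exact (Complex.lt_def.1 h5).1

/-! ### Counting eigenvalues -/

/-- A positive definite and a negative definite subspace for the same form meet only in `0`,
which bounds the sum of their dimensions by `d`. -/
lemma countP_add_countP_le {d : ℕ} (H K K' : Matrix (Fin d) (Fin d) ℝ) (hH : H.IsSymm)
    (hHinv : IsUnit H.det) (hK : (H * K)ᵀ = -(H * K)) (hK' : (H * K')ᵀ = -(H * K')) :
    ((H + K).map Complex.ofReal).charpoly.roots.countP (fun z => 0 < z.re) +
      ((H + K').map Complex.ofReal).charpoly.roots.countP (fun z => z.re < 0) ≤ d := by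
  have hh : ∀ x y, star (hermForm H x y) = hermForm H y x := fun x y => by
    rw [star_hermForm, hH.eq]
  obtain ⟨U, hU, hUn⟩ := exists_definite 1 d (hermForm H) hh _
    (hermForm_pos H K hH hHinv hK) (by simp)
  obtain ⟨U', hU', hUn'⟩ := exists_definite (-1) d (hermForm H) hh _
    (hermForm_pos H K' hH hHinv hK') (by simp)
  have hdisj : Disjoint U U' := by
    rw [Submodule.disjoint_def]
    intro x hx hx'
    by_contra h0
    have h1 := hU x hx h0
    have h2 := hU' x hx' h0
    linarith
  have := Submodule.finrank_add_finrank_le_of_disjoint hdisj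
  simpa [hUn, hUn'] using this

lemma countP_re_eq_zero {d : ℕ} (H K : Matrix (Fin d) (Fin d) ℝ) (hH : H.IsSymm)
    (hHinv : IsUnit H.det) (hK : (H * K)ᵀ = -(H * K)) :
    ((H + K).map Complex.ofReal).charpoly.roots.countP (fun z => z.re = 0) = 0 := by
  rw [Multiset.countP_eq_zero]
  intro z hz
  refine re_ne_zero_of_root (hermForm H) (fun x y => by rw [star_hermForm, hH.eq]) _
    (hermForm_pos H K hH hHinv hK) ?_
  rwa [charpoly_toLin']

lemma countP_add_countP_eq {d : ℕ} (H K : Matrix (Fin d) (Fin d) ℝ) (hH : H.IsSymm)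
    (hHinv : IsUnit H.det) (hK : (H * K)ᵀ = -(H * K)) :
    ((H + K).map Complex.ofReal).charpoly.roots.countP (fun z => 0 < z.re) +
      ((H + K).map Complex.ofReal).charpoly.roots.countP (fun z => z.re < 0) = d := by
  have hcard : ((H + K).map Complex.ofReal).charpoly.roots.card = d := by
    rw [IsAlgClosed.card_roots_eq_natDegree, charpoly_natDegree_eq_dim, Fintype.card_fin]
  have h0 := Multiset.countP_eq_zero.1 (countP_re_eq_zero H K hH hHinv hK)
  have h1 := Multiset.card_eq_countP_add_countP (fun z : ℂ => 0 < z.re)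
    ((H + K).map Complex.ofReal).charpoly.roots
  rw [hcard] at h1
  refine Eq.trans ?_ h1.symm
  congr 1
  refine Multiset.countP_congr rfl fun z hz => ?_
  have := h0 z hz
  simp only [not_lt, eq_iff_iff]
  exact ⟨le_of_lt, fun h => lt_of_le_of_ne h this⟩

/-- A real symmetric matrix has all its eigenvalues in `ℝ`, so passing to `ℂ` adds no roots. -/
lemma countP_neg_map_ofReal {d : ℕ} (H : Matrix (Fin d) (Fin d) ℝ) (hH : H.IsSymm) :
    (H.map Complex.ofReal).charpoly.roots.countP (fun z => z.re < 0) =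
      H.charpoly.roots.countP (fun x => x < 0) := by
  have hHerm : H.IsHermitian := by
    rw [Matrix.IsHermitian, conjTranspose_eq_transpose_of_trivial]; exact hH
  have h1 : (H.map Complex.ofReal).charpoly = H.charpoly.map Complex.ofRealHom :=
    Matrix.charpoly_map H Complex.ofRealHom
  rw [h1, hHerm.splits_charpoly.roots_map, Multiset.countP_map, ← Multiset.countP_eq_card_filter]
  simp

/-- **Lemma 1.1 (first part).** Let `H` be a real symmetric invertible `d × d` matrix with
exactly `p` negative eigenvalues (counted with multiplicity) and let `L` be a real `d × d`
matrix such that `H * L` is antisymmetric.  Then the characteristic polynomial of `H + Lᵀ`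
has, over `ℂ` and counted with algebraic multiplicity, exactly `p` roots with negative real
part, exactly `d - p` roots with positive real part, and no root with zero real part. -/
theorem stmt0 {d p : ℕ} (hd : 1 ≤ d) (hp : p ≤ d)
    (H L : Matrix (Fin d) (Fin d) ℝ)
    (hHsymm : H.IsSymm) (hHinv : IsUnit H.det)
    (hHneg : H.charpoly.roots.countP (fun x => x < 0) = p)
    (hanti : (H * L)ᵀ = -(H * L)) :
    ((((H + Lᵀ).map Complex.ofReal).charpoly.roots.countP (fun z => z.re < 0)) = p) ∧
    ((((H + Lᵀ).map Complex.ofReal).charpoly.roots.countP (fun z => 0 < z.re)) = d - p) ∧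
    ((((H + Lᵀ).map Complex.ofReal).charpoly.roots.countP (fun z => z.re = 0)) = 0) := by
  have htr : ((H + Lᵀ).map Complex.ofReal).charpoly = ((H + L).map Complex.ofReal).charpoly := by
    rw [← charpoly_transpose ((H + L).map Complex.ofReal), ← transpose_map, transpose_add, hHsymm.eq]
  have h0 : (H * 0)ᵀ = -(H * 0) := by simp
  have hp' := countP_neg_map_ofReal H hHsymm
  -- the inertia of `H + L` is compared with that of `H`, the case `K = 0`
  have a1 := countP_add_countP_le H L 0 hHsymm hHinv hanti h0
  have a2 := countP_add_countP_le H 0 L hHsymm hHinv h0 hanti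
  have a3 := countP_add_countP_eq H L hHsymm hHinv hanti
  have a4 := countP_add_countP_eq H 0 hHsymm hHinv h0
  rw [add_zero] at a1 a2 a4
  rw [htr]
  refine ⟨?_, ?_, countP_re_eq_zero H L hHsymm hHinv hanti⟩ <;> omega
end

section
/- Assume p = 1. Then the matrix H + Lᵀ has a unique eigenvalue μ with strictly negative real part (counted with multiplicity), and this eigenvalue μ is real; in other words, the characteristic polynomial of H + Lᵀ has exactly one root in {Re z < 0}, this root is a negative real number, and all its other roots have strictly positive real part. -/
/-!
Put `N = H + L`; it has the same characteristic polynomial as `Nᵀ = H + Lᵀ`. As `H * L` is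
antisymmetric, `H * N` has symmetric part `H²`, so that `Re ⟪x, H N x⟫ = ‖H x‖² > 0` for every
`x ≠ 0` in `ℂᵈ` (`re_form_mul_pos`). This is a Lyapunov inequality for the hermitian form
`B(x, y) = ⟪x, H y⟫`: on an eigenvector `u` of `N` with eigenvalue `λ` it reads
`Re λ * B(u, u) > 0`.

*At most one root in `Re ≤ 0`.* Two such roots, counted with multiplicity, would give `u, v`,
linearly independent, with `N u = λ₁ u` and `N v = λ₂ v + c u` (`exists_pair_of_two_le_countP`).
Then `B(u, u) < 0`, and subtracting from `v` its `B`-orthogonal projection onto `u` preserves the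
shape of the equations, so also `B(v, v) < 0` (`exists_orthogonal_neg_pair`). A combination of `u` and `v`
orthogonal to the unique negative eigenvector of `H` contradicts the spectral theorem.

*A negative real root.* `det (H² + s H L)` never vanishes for real `s`, hence is positive at `s = 1`
as it is at `s = 0`. So `det N` has the sign of `det H`, which is negative, and the monic
polynomial `t ↦ det (t + N)` vanishes at some `t > 0`.
-/

open Matrix Polynomial
open scoped Classical

/-! ### Pairs of roots of the characteristic polynomial -/

/-- For a complex root `μ` of multiplicity at least two, there are an eigenvector `u` and a vector
`v`, not a multiple of `u`, that is either another eigenvector or the next link of a Jordan chain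
over `u`. -/
lemma exists_pair_of_two_le_finrank {V : Type*} [AddCommGroup V] [Module ℂ V]
    (f : Module.End ℂ V) (μ : ℂ) (h : 2 ≤ Module.finrank ℂ (f.maxGenEigenspace μ)) :
    ∃ (u v : V) (c : ℂ), u ≠ 0 ∧ (∀ a : ℂ, v - a • u ≠ 0) ∧ f u = μ • u ∧
      f v = μ • v + c • u := by
  -- Either `f - μ` and its square have the same kernel, so that the generalized eigenspace is
  -- an honest eigenspace of dimension at least two, or there is a Jordan chain of length two.
  by_cases hg : ∀ x, (f - μ • (1 : Module.End ℂ V)) ((f - μ • (1 : Module.End ℂ V)) x) = 0 →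
      (f - μ • (1 : Module.End ℂ V)) x = 0
  · have hker : ∀ x ∈ f.maxGenEigenspace μ, f x = μ • x := by
      intro x hx
      obtain ⟨k, hk⟩ := (f.mem_maxGenEigenspace μ x).1 hx
      have key : ∀ k : ℕ, ((f - μ • (1 : Module.End ℂ V)) ^ k) x = 0 →
          (f - μ • (1 : Module.End ℂ V)) x = 0 := by
        intro k
        induction k with
        | zero => intro h0; simp at h0; simp [h0]
        | succ k ih =>
          intro h0
          cases k with
          | zero => simpa using h0
          | succ k =>
            apply ih
            rw [pow_succ', Module.End.mul_apply]
            apply hg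
            rw [pow_succ', pow_succ'] at h0
            simpa only [Module.End.mul_apply] using h0
      have := key k hk
      simpa [sub_eq_zero] using this
    by_contra! hcon
    have hne : ∃ u : f.maxGenEigenspace μ, u ≠ 0 := by
      by_contra! h0
      have h1 : Module.finrank ℂ (f.maxGenEigenspace μ) = 0 := by
        have : Subsingleton (f.maxGenEigenspace μ) := ⟨fun a b => by rw [h0 a, h0 b]⟩
        exact Module.finrank_zero_of_subsingleton
      omega
    obtain ⟨u, hu⟩ := hne
    have := finrank_le_one (R := ℂ) u (fun w => by
      by_contra! hw
      refine hcon u w 0 (by simpa using hu) (fun a ha => hw a ?_) (hker _ u.2)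
        (by simpa using hker _ w.2)
      exact Subtype.ext (sub_eq_zero.1 ha).symm)
    omega
  · push Not at hg
    obtain ⟨v, hv, hv0⟩ := hg
    refine ⟨(f - μ • (1 : Module.End ℂ V)) v, v, 1, hv0, fun a ha => hv0 ?_, ?_, by simp⟩
    · rw [sub_eq_zero.1 ha, map_smul, hv, smul_zero]
    · rw [LinearMap.sub_apply _ _ ((f - μ • (1 : Module.End ℂ V)) v), sub_eq_zero] at hv
      simpa using hv

/-- Two roots of the characteristic polynomial satisfying `P`, equal or not, are realised by an
upper triangular pair of linearly independent vectors. -/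
lemma exists_pair_of_two_le_countP {d : ℕ} (N : Matrix (Fin d) (Fin d) ℂ) (P : ℂ → Prop)
    (h : 2 ≤ N.charpoly.roots.countP P) :
    ∃ (a b c : ℂ) (u v : Fin d → ℂ), P a ∧ P b ∧ u ≠ 0 ∧ (∀ s : ℂ, v - s • u ≠ 0) ∧
      N *ᵥ u = a • u ∧ N *ᵥ v = b • v + c • u := by
  have hroot : ∀ a ∈ N.charpoly.roots, ∃ u : Fin d → ℂ, u ≠ 0 ∧ N *ᵥ u = a • u := by
    intro a ha
    have h1 : Module.End.HasEigenvalue (Matrix.toLin' N) a := by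
      rw [Module.End.hasEigenvalue_iff_isRoot_charpoly, Matrix.charpoly_toLin']
      exact (mem_roots'.1 ha).2
    obtain ⟨u, hu⟩ := h1.exists_hasEigenvector
    exact ⟨u, hu.2, by simpa using hu.apply_eq_smul⟩
  by_cases hex : ∃ a ∈ N.charpoly.roots, ∃ b ∈ N.charpoly.roots, P a ∧ P b ∧ a ≠ b
  · obtain ⟨a, ha, b, hb, hPa, hPb, hab⟩ := hex
    obtain ⟨u, hu0, hu⟩ := hroot a ha
    obtain ⟨v, hv0, hv⟩ := hroot b hb
    refine ⟨a, b, 0, u, v, hPa, hPb, hu0, fun s hs => ?_, hu, by simpa using hv⟩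
    have hvs := sub_eq_zero.1 hs
    have h2 : (a - b) • v = 0 := by
      rw [sub_smul, ← hv, hvs, Matrix.mulVec_smul, hu, smul_comm, sub_self]
    rcases smul_eq_zero.1 h2 with h3 | h3
    · exact hab (sub_eq_zero.1 h3)
    · exact hv0 h3
  · push Not at hex
    obtain ⟨a, ha, hPa⟩ := Multiset.countP_pos.1 (by omega : 0 < N.charpoly.roots.countP P)
    have hcount : N.charpoly.roots.countP P ≤ N.charpoly.roots.count a := by
      rw [Multiset.count]
      rw [Multiset.countP_congr (s := N.charpoly.roots) rfl (p := P) (p' := fun x => a = x)]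
      intro x hx
      simp only [eq_iff_iff]
      exact ⟨fun hPx => hex a ha x hx hPa hPx, fun h => h ▸ hPa⟩
    have hfr : 2 ≤ Module.finrank ℂ (Module.End.maxGenEigenspace (Matrix.toLin' N) a) := by
      rw [LinearMap.finrank_maxGenEigenspace_eq, Matrix.charpoly_toLin', ← count_roots]
      exact h.trans (by convert hcount)
    obtain ⟨u, v, c, h1, h2, h3, h4⟩ := exists_pair_of_two_le_finrank _ _ hfr
    exact ⟨a, a, c, u, v, hPa, hPa, h1, h2, by simpa using h3, by simpa using h4⟩

/-! ### The Lyapunov inequality and negative planes -/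

/-- The Lyapunov inequality: if the hermitian part of `A * N` is `Aᴴ * A` and `A` is injective, then
`Re ⟪x, A N x⟫ = ‖A x‖² > 0` for `x ≠ 0`. -/
lemma re_form_mul_pos {d : ℕ} (A N : Matrix (Fin d) (Fin d) ℂ)
    (hAN : A * N + (A * N)ᴴ = (2 : ℂ) • (Aᴴ * A)) (hdet : A.det ≠ 0)
    (x : Fin d → ℂ) (hx : x ≠ 0) : 0 < (star x ⬝ᵥ (A *ᵥ (N *ᵥ x))).re := by
  have hAx : A *ᵥ x ≠ 0 := fun h => hdet (Matrix.exists_mulVec_eq_zero_iff.1 ⟨x, hx, h⟩)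
  have h1 : 0 < (star (A *ᵥ x) ⬝ᵥ (A *ᵥ x)).re := by
    have : (star (A *ᵥ x) ⬝ᵥ (A *ᵥ x)).re = ∑ i, Complex.normSq ((A *ᵥ x) i) := by
      simp [dotProduct, Complex.normSq_apply]
    rw [this]
    obtain ⟨i, hi⟩ := Function.ne_iff.1 hAx
    exact Finset.sum_pos' (fun i _ => Complex.normSq_nonneg _)
      ⟨i, Finset.mem_univ _, Complex.normSq_pos.2 hi⟩
  have h2 : star x ⬝ᵥ ((A * N + (A * N)ᴴ) *ᵥ x) = 2 * (star (A *ᵥ x) ⬝ᵥ (A *ᵥ x)) := by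
    rw [hAN, Matrix.smul_mulVec, dotProduct_smul, ← Matrix.mulVec_mulVec, star_mulVec,
      ← dotProduct_mulVec, smul_eq_mul]
  have h3 : star x ⬝ᵥ ((A * N)ᴴ *ᵥ x) = star (star x ⬝ᵥ ((A * N) *ᵥ x)) := by
    rw [dotProduct_mulVec, ← star_mulVec, star_dotProduct]
  rw [Matrix.add_mulVec, dotProduct_add, h3] at h2
  have h4 := congrArg Complex.re h2
  simp at h4
  rw [Matrix.mulVec_mulVec]
  linarith

/-- Vectors as produced by `exists_pair_of_two_le_countP`, with eigenvalues in `Re ≤ 0`, span a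
plane with a basis orthogonal for the form `⟪x, A y⟫` on which the form is negative. -/
lemma exists_orthogonal_neg_pair {d : ℕ} (A N : Matrix (Fin d) (Fin d) ℂ) (hA : Aᴴ = A)
    (hAN : A * N + (A * N)ᴴ = (2 : ℂ) • (Aᴴ * A)) (hdet : A.det ≠ 0)
    (a b c : ℂ) (u v : Fin d → ℂ) (ha : a.re ≤ 0) (hb : b.re ≤ 0) (hu : u ≠ 0)
    (hv : ∀ s : ℂ, v - s • u ≠ 0) (hNu : N *ᵥ u = a • u) (hNv : N *ᵥ v = b • v + c • u) :
    ∃ w : Fin d → ℂ, (star u ⬝ᵥ (A *ᵥ u)).re < 0 ∧ (star w ⬝ᵥ (A *ᵥ w)).re < 0 ∧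
      star u ⬝ᵥ (A *ᵥ w) = 0 ∧ star w ⬝ᵥ (A *ᵥ u) = 0 := by
  have hconj : ∀ x y : Fin d → ℂ, star (star x ⬝ᵥ (A *ᵥ y)) = star y ⬝ᵥ (A *ᵥ x) := by
    intro x y
    rw [star_dotProduct, star_star, star_mulVec, hA, ← dotProduct_mulVec]
  have him : ∀ x : Fin d → ℂ, (star x ⬝ᵥ (A *ᵥ x)).im = 0 := fun x =>
    Complex.conj_eq_iff_im.1 (hconj x x)
  -- If `⟪x, A N x⟫ = e ⟪x, A x⟫` with `Re e ≤ 0`, then `⟪x, A x⟫ < 0`.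
  have hneg : ∀ (x : Fin d → ℂ) (e : ℂ), x ≠ 0 → e.re ≤ 0 →
      star x ⬝ᵥ (A *ᵥ (N *ᵥ x)) = e * (star x ⬝ᵥ (A *ᵥ x)) → (star x ⬝ᵥ (A *ᵥ x)).re < 0 := by
    intro x e hx he h
    have h1 := re_form_mul_pos A N hAN hdet x hx
    rw [h, Complex.mul_re, him x] at h1
    by_contra! h2
    nlinarith
  have hu1 : (star u ⬝ᵥ (A *ᵥ u)).re < 0 := by
    apply hneg u a hu ha
    rw [hNu, Matrix.mulVec_smul, dotProduct_smul, smul_eq_mul]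
  have hu2 : star u ⬝ᵥ (A *ᵥ u) ≠ 0 := fun h => by rw [h] at hu1; simp at hu1
  obtain ⟨s, hs⟩ : ∃ s, s = (star u ⬝ᵥ (A *ᵥ v)) / (star u ⬝ᵥ (A *ᵥ u)) := ⟨_, rfl⟩
  have huw : star u ⬝ᵥ (A *ᵥ (v - s • u)) = 0 := by
    rw [Matrix.mulVec_sub, dotProduct_sub, Matrix.mulVec_smul, dotProduct_smul, smul_eq_mul, hs,
      div_mul_cancel₀ _ hu2, sub_self]
  have hwu : star (v - s • u) ⬝ᵥ (A *ᵥ u) = 0 := by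
    rw [← hconj, huw, star_zero]
  refine ⟨v - s • u, hu1, hneg _ b (hv s) hb ?_, huw, hwu⟩
  have hNw : N *ᵥ (v - s • u) = b • (v - s • u) + (c + s * b - s * a) • u := by
    rw [Matrix.mulVec_sub, Matrix.mulVec_smul, hNu, hNv]
    module
  rw [hNw, Matrix.mulVec_add, dotProduct_add, Matrix.mulVec_smul, Matrix.mulVec_smul,
    dotProduct_smul, dotProduct_smul, hwu]
  simp

/-- If only the `i₀`-th eigenvalue of `H` is negative, the quadratic form of `H` is nonnegative on
the orthogonal complement of the `i₀`-th eigenvector. -/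
lemma form_nonneg_of_orthogonal {d : ℕ} (H : Matrix (Fin d) (Fin d) ℝ) (hH : H.IsHermitian)
    (i₀ : Fin d) (h : ∀ i, i ≠ i₀ → 0 ≤ hH.eigenvalues i) (x : Fin d → ℝ)
    (hx : ⇑(hH.eigenvectorBasis i₀) ⬝ᵥ x = 0) : 0 ≤ x ⬝ᵥ (H *ᵥ x) := by
  set U : Matrix (Fin d) (Fin d) ℝ := ↑hH.eigenvectorUnitary with hU
  have hsp : H = U * diagonal hH.eigenvalues * Uᵀ := by
    have := hH.spectral_theorem
    rw [Unitary.conjStarAlgAut_apply] at this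
    simpa [star_eq_conjTranspose] using this
  have h1 : x ⬝ᵥ (H *ᵥ x) = ∑ i, hH.eigenvalues i * ((Uᵀ *ᵥ x) i) ^ 2 := by
    conv_lhs => rw [hsp]
    rw [← Matrix.mulVec_mulVec, ← Matrix.mulVec_mulVec, dotProduct_mulVec,
      ← Matrix.mulVec_transpose]
    simp only [dotProduct, Matrix.mulVec_diagonal]
    exact Finset.sum_congr rfl fun i _ => by ring
  rw [h1]
  refine Finset.sum_nonneg fun i _ => ?_
  by_cases hi : i = i₀
  · have : (Uᵀ *ᵥ x) i = 0 := by rw [hi]; exact hx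
    rw [this]; simp
  · exact mul_nonneg (h i hi) (sq_nonneg _)

/-- A real symmetric matrix with exactly one negative eigenvalue admits no orthogonal pair of
complex vectors on which its hermitian form is negative. -/
lemma no_orthogonal_neg_pair {d : ℕ} (H : Matrix (Fin d) (Fin d) ℝ) (hH : H.IsHermitian)
    (i₀ : Fin d) (h : ∀ i, i ≠ i₀ → 0 ≤ hH.eigenvalues i) (u w : Fin d → ℂ)
    (hu : (star u ⬝ᵥ ((H.map Complex.ofReal) *ᵥ u)).re < 0)
    (hw : (star w ⬝ᵥ ((H.map Complex.ofReal) *ᵥ w)).re < 0)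
    (huw : star u ⬝ᵥ ((H.map Complex.ofReal) *ᵥ w) = 0)
    (hwu : star w ⬝ᵥ ((H.map Complex.ofReal) *ᵥ u) = 0) : False := by
  set e : Fin d → ℝ := ⇑(hH.eigenvectorBasis i₀) with he
  set A := H.map Complex.ofReal with hA
  have hpos : ∀ z : Fin d → ℂ, (fun i => (e i : ℂ)) ⬝ᵥ z = 0 → 0 ≤ (star z ⬝ᵥ (A *ᵥ z)).re := by
    intro z hz
    have h1 : e ⬝ᵥ (fun i => (z i).re) = 0 := by
      have := congrArg Complex.re hz
      simpa [dotProduct] using this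
    have h2 : e ⬝ᵥ (fun i => (z i).im) = 0 := by
      have := congrArg Complex.im hz
      simpa [dotProduct] using this
    have h3 : (star z ⬝ᵥ (A *ᵥ z)).re = (fun i => (z i).re) ⬝ᵥ (H *ᵥ fun i => (z i).re) +
        (fun i => (z i).im) ⬝ᵥ (H *ᵥ fun i => (z i).im) := by
      simp [dotProduct, Matrix.mulVec, hA, Finset.sum_add_distrib]
    rw [h3]
    exact add_nonneg (form_nonneg_of_orthogonal H hH i₀ h _ h1)
      (form_nonneg_of_orthogonal H hH i₀ h _ h2)
  -- The combination `q • u - p • w` is orthogonal to `e`.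
  obtain ⟨p, hp⟩ : ∃ p, p = (fun i => (e i : ℂ)) ⬝ᵥ u := ⟨_, rfl⟩
  obtain ⟨q, hq⟩ : ∃ q, q = (fun i => (e i : ℂ)) ⬝ᵥ w := ⟨_, rfl⟩
  by_cases hp0 : p = 0
  · have := hpos u (by rw [← hp, hp0])
    linarith
  have h1 := hpos (q • u - p • w) (by
    rw [dotProduct_sub, dotProduct_smul, dotProduct_smul, ← hp, ← hq, smul_eq_mul, smul_eq_mul]
    ring)
  have h2 : star (q • u - p • w) ⬝ᵥ (A *ᵥ (q • u - p • w)) =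
      (Complex.normSq q : ℂ) * (star u ⬝ᵥ (A *ᵥ u)) +
      (Complex.normSq p : ℂ) * (star w ⬝ᵥ (A *ᵥ w)) := by
    simp only [star_sub, star_smul, Matrix.mulVec_sub, Matrix.mulVec_smul, dotProduct_sub,
      sub_dotProduct, smul_dotProduct, dotProduct_smul, huw, hwu, smul_eq_mul,
      Complex.normSq_eq_conj_mul_self, Complex.star_def]
    ring
  rw [h2, Complex.add_re, Complex.re_ofReal_mul, Complex.re_ofReal_mul] at h1
  have h3 := Complex.normSq_pos.2 hp0
  have h4 := Complex.normSq_nonneg q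
  nlinarith

/-! ### Existence of a negative real root -/

/-- `det (H² + s H L)` has no real zero `s`, so it is positive at `s = 1`; hence `det (H + L)` and
`det H` have the same sign. -/
lemma det_mul_det_add_pos {d : ℕ} (H L : Matrix (Fin d) (Fin d) ℝ) (hH : Hᵀ = H)
    (hdet : H.det ≠ 0) (hanti : (H * L)ᵀ = -(H * L)) : 0 < H.det * (H + L).det := by
  have hne : ∀ s : ℝ, (H * H + s • (H * L)).det ≠ 0 := by
    intro s hs
    obtain ⟨x, hx0, hx⟩ := Matrix.exists_mulVec_eq_zero_iff.2 hs
    have h1 : x ⬝ᵥ ((H * L) *ᵥ x) = 0 := by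
      have : x ⬝ᵥ ((H * L) *ᵥ x) = - (x ⬝ᵥ ((H * L) *ᵥ x)) := by
        conv_lhs => rw [dotProduct_mulVec, ← Matrix.mulVec_transpose, hanti, dotProduct_comm]
        rw [Matrix.neg_mulVec, dotProduct_neg]
      linarith
    have h2 : (H *ᵥ x) ⬝ᵥ (H *ᵥ x) = 0 := by
      have h3 : x ⬝ᵥ ((H * H + s • (H * L)) *ᵥ x) = 0 := by rw [hx, dotProduct_zero]
      rw [Matrix.add_mulVec, dotProduct_add, Matrix.smul_mulVec, dotProduct_smul, h1, smul_zero,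
        add_zero, ← Matrix.mulVec_mulVec, dotProduct_mulVec, ← Matrix.mulVec_transpose, hH] at h3
      exact h3
    exact hdet (Matrix.exists_mulVec_eq_zero_iff.1 ⟨x, hx0, dotProduct_self_eq_zero.1 h2⟩)
  have hcont : Continuous fun s : ℝ => (H * H + s • (H * L)).det := by fun_prop
  have h0 : 0 < (H * H + (0 : ℝ) • (H * L)).det := by
    rw [zero_smul, add_zero, Matrix.det_mul]
    exact mul_self_pos.2 hdet
  have h1 : 0 < (H * H + (1 : ℝ) • (H * L)).det := by
    by_contra! hle
    obtain ⟨s, -, hs⟩ := intermediate_value_Icc' (zero_le_one (α := ℝ)) hcont.continuousOn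
      ⟨hle, h0.le⟩
    exact hne s hs
  rwa [one_smul, ← Matrix.mul_add, Matrix.det_mul] at h1

lemma exists_neg_root_of_det_neg {d : ℕ} (hd : 1 ≤ d) (N : Matrix (Fin d) (Fin d) ℝ)
    (hN : N.det < 0) : ∃ μ : ℝ, μ < 0 ∧ N.charpoly.IsRoot μ := by
  -- `(-N).charpoly` is monic with value `det (t + N)` at `t`; its positive roots are minus the
  -- negative roots of `N.charpoly`.
  have hlim := (-N).charpoly.tendsto_atTop_of_leadingCoeff_nonneg
    (by rw [Matrix.charpoly_degree_eq_dim, Fintype.card_fin]; exact_mod_cast hd)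
    (by rw [(Matrix.charpoly_monic _).leadingCoeff]; exact zero_le_one)
  have h0 : (-N).charpoly.eval 0 < 0 := by
    rw [Matrix.eval_charpoly]; simpa using hN
  obtain ⟨T, hT0, hT⟩ := ((Filter.eventually_ge_atTop (0 : ℝ)).and
    (hlim.eventually_ge_atTop 0)).exists
  obtain ⟨t, ht, hev⟩ := intermediate_value_Icc hT0 (-N).charpoly.continuous.continuousOn
    ⟨h0.le, hT⟩
  have ht0 : t ≠ 0 := by
    rintro rfl
    exact h0.ne hev
  refine ⟨-t, neg_lt_zero.2 (lt_of_le_of_ne ht.1 ht0.symm), ?_⟩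
  have hev' : (-N).charpoly.eval t = 0 := hev
  rw [Matrix.eval_charpoly] at hev'
  rw [Polynomial.IsRoot, Matrix.eval_charpoly]
  have : scalar (Fin d) (-t) - N = -(scalar (Fin d) t - -N) := by
    rw [map_neg]; abel
  rw [this, Matrix.det_neg, hev', mul_zero]

/-- The negative eigenvalue, as an index into the eigenvalues of the spectral theorem. -/
lemma exists_unique_neg_index {d : ℕ} (H : Matrix (Fin d) (Fin d) ℝ) (hH : H.IsHermitian)
    (hHneg : H.charpoly.roots.countP (fun x => x < 0) = 1) :
    ∃ i₀, hH.eigenvalues i₀ < 0 ∧ ∀ i, i ≠ i₀ → 0 ≤ hH.eigenvalues i := by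
  rw [hH.roots_charpoly_eq_eigenvalues, Multiset.countP_map, ← Finset.filter_val,
    Finset.card_val, Finset.card_eq_one] at hHneg
  obtain ⟨i₀, hi⟩ := hHneg
  simp only [Finset.ext_iff, Finset.mem_filter, Finset.mem_univ, true_and,
    Finset.mem_singleton] at hi
  exact ⟨i₀, (hi i₀).2 rfl, fun i hne => not_lt.1 fun hlt => hne ((hi i).1 hlt)⟩

/-! ### The eigenvalues of `H + Lᵀ` -/

/-- **Lemma 1.1, case `p = 1`.** If the real symmetric invertible matrix `H` has exactly one
negative eigenvalue and `H * L` is antisymmetric, then `H + Lᵀ` has exactly one eigenvalue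
with strictly negative real part (counted with algebraic multiplicity), this eigenvalue is a
negative real number `μ`, and all the other eigenvalues have strictly positive real part. -/
theorem stmt1 {d : ℕ} (hd : 1 ≤ d)
    (H L : Matrix (Fin d) (Fin d) ℝ)
    (hHsymm : H.IsSymm) (hHinv : IsUnit H.det)
    (hHneg : H.charpoly.roots.countP (fun x => x < 0) = 1)
    (hanti : (H * L)ᵀ = -(H * L)) :
    ∃ μ : ℝ, μ < 0 ∧
      (μ : ℂ) ∈ ((H + Lᵀ).map Complex.ofReal).charpoly.roots ∧
      (((H + Lᵀ).map Complex.ofReal).charpoly.roots.countP (fun z => z.re < 0)) = 1 ∧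
      (((H + Lᵀ).map Complex.ofReal).charpoly.roots.countP (fun z => ¬ 0 < z.re)) = 1 := by
  have hH : H.IsHermitian := by
    rw [Matrix.IsHermitian, conjTranspose_eq_transpose_of_trivial]; exact hHsymm
  have hdet : H.det ≠ 0 := hHinv.ne_zero
  obtain ⟨i₀, hi₀, hi⟩ := exists_unique_neg_index H hH hHneg
  have hdetneg : H.det < 0 := by
    have hnn : 0 ≤ ∏ i ∈ Finset.univ.erase i₀, (hH.eigenvalues i : ℝ) :=
      Finset.prod_nonneg fun i hmem => hi i (Finset.ne_of_mem_erase hmem)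
    have h1 : H.det ≤ 0 := by
      rw [hH.det_eq_prod_eigenvalues, ← Finset.mul_prod_erase _ _ (Finset.mem_univ i₀)]
      exact mul_nonpos_of_nonpos_of_nonneg hi₀.le hnn
    exact lt_of_le_of_ne h1 hdet
  have hNdet : (H + L).det < 0 := by
    have := det_mul_det_add_pos H L hHsymm hdet hanti
    by_contra! h
    nlinarith
  obtain ⟨μ, hμ, hroot⟩ := exists_neg_root_of_det_neg hd _ hNdet
  have hchar : ((H + Lᵀ).map Complex.ofReal).charpoly =
      ((H + L).map Complex.ofReal).charpoly := by
    rw [← Matrix.charpoly_transpose, ← Matrix.transpose_map, Matrix.transpose_add,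
      Matrix.transpose_transpose, hHsymm.eq]
  have hmem : (μ : ℂ) ∈ ((H + L).map Complex.ofReal).charpoly.roots := by
    rw [mem_roots (Matrix.charpoly_monic _).ne_zero]
    have := hroot.map (f := Complex.ofRealHom)
    rwa [← Matrix.charpoly_map] at this
  set A := H.map Complex.ofReal with hAdef
  set N := (H + L).map Complex.ofReal with hNdef
  have hA : Aᴴ = A := by
    ext i j
    simp [hAdef, hHsymm.apply i j]
  have hAdet : A.det ≠ 0 := by
    have : A.det = (H.det : ℂ) := (Complex.ofRealHom.map_det H).symm
    rw [this]
    exact_mod_cast hdet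
  have hAN : A * N + (A * N)ᴴ = (2 : ℂ) • (Aᴴ * A) := by
    have hreal : H * (H + L) + (H * (H + L))ᵀ = (2 : ℝ) • (H * H) := by
      rw [Matrix.mul_add, Matrix.transpose_add, hanti, Matrix.transpose_mul, hHsymm.eq, two_smul]
      abel
    have hmul : A * N = (H * (H + L)).map Complex.ofReal :=
      (Matrix.map_mul (f := Complex.ofRealHom)).symm
    have hsq : A * A = (H * H).map Complex.ofReal :=
      (Matrix.map_mul (f := Complex.ofRealHom)).symm
    rw [hA, hmul, hsq]
    ext i j
    have := congrFun (congrFun hreal i) j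
    simp only [Matrix.add_apply, Matrix.transpose_apply, Matrix.smul_apply, smul_eq_mul] at this
    simp only [Matrix.add_apply, Matrix.conjTranspose_apply, Matrix.map_apply, Matrix.smul_apply,
      smul_eq_mul, Complex.star_def, Complex.conj_ofReal]
    exact_mod_cast this
  have hle : N.charpoly.roots.countP (fun z => ¬ 0 < z.re) ≤ 1 := by
    by_contra! h
    obtain ⟨a, b, c, u, v, ha, hb, hu, hv, hNu, hNv⟩ :=
      exists_pair_of_two_le_countP N _ h
    obtain ⟨w, h1, h2, h3, h4⟩ := exists_orthogonal_neg_pair A N hA hAN hAdet a b c u v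
      ha hb hu hv hNu hNv
    exact no_orthogonal_neg_pair H hH i₀ hi u w h1 h2 h3 h4
  have hpos : 0 < N.charpoly.roots.countP (fun z => z.re < 0) :=
    Multiset.countP_pos_of_mem hmem (by simpa using hμ)
  have hmono : N.charpoly.roots.countP (fun z => z.re < 0) ≤
      N.charpoly.roots.countP (fun z => ¬ 0 < z.re) := by
    rw [Multiset.countP_eq_card_filter, Multiset.countP_eq_card_filter]
    exact Multiset.card_le_card
      (Multiset.monotone_filter_right _ fun z hz => not_lt.2 (le_of_lt hz))
  rw [hchar]
  exact ⟨μ, hμ, hmem, by omega, by omega⟩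
end

section
/- Assume p = 1, let μ < 0 be the unique (real) eigenvalue of H + Lᵀ with negative real part, and let ξ ∈ ℝᵈ be a unit vector with (H + Lᵀ)ξ = μξ. Then the symmetric matrix H + 2|μ|·ξξᵀ is positive definite and det(H + 2|μ|·ξξᵀ) = −det H. -/
/-!
Put `η = H⁻¹ ξ`. Since `Lᵀ H = (H L)ᵀ` is antisymmetric, pairing `(H + Lᵀ) ξ = μ ξ` with `η` kills
the contribution of `L` and leaves `1 = |ξ|² = μ ⟨η, ξ⟩`, that is `⟨ξ, H⁻¹ ξ⟩ = 1 / μ`.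

The determinant then follows from the matrix determinant lemma,
`det (H + 2|μ| ξ ξᵀ) = det H · (1 + 2|μ| / μ) = -det H`.

For positivity, `⟨η, H η⟩ = 1 / μ < 0`, and `H` has index one, so `H` is positive definite on the
`H`-orthogonal complement `ξ^⊥` of `η` (`quad_pos_of_orthogonal`). Writing `x = a η + y` with
`⟨ξ, y⟩ = 0`, the quadratic form of `H + 2|μ| ξ ξᵀ` at `x` equals `⟨y, H y⟩ + a² / |μ|`, which is
positive for `x ≠ 0` (`quad_add_pos`).
-/

open Matrix Polynomial
open scoped Classical

/-- A symmetric invertible matrix with a single negative eigenvalue is positive definite on a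
hyperplane, namely the orthogonal complement of the corresponding eigenvector. -/
lemma exists_hyperplane_quad_pos {d : ℕ} (H : Matrix (Fin d) (Fin d) ℝ)
    (hHsymm : H.IsSymm) (hHinv : IsUnit H.det)
    (hHneg : H.charpoly.roots.countP (fun x => x < 0) = 1) :
    ∃ v : Fin d → ℝ, ∀ z : Fin d → ℝ, z ≠ 0 → v ⬝ᵥ z = 0 → 0 < z ⬝ᵥ H *ᵥ z := by
  have hH : H.IsHermitian := by
    rw [Matrix.IsHermitian, Matrix.conjTranspose_eq_transpose_of_trivial]; exact hHsymm
  have hne : ∀ i, hH.eigenvalues i ≠ 0 := by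
    intro i hi
    apply hHinv.ne_zero
    rw [hH.det_eq_prod_eigenvalues]
    exact Finset.prod_eq_zero (Finset.mem_univ i) (by simp [hi])
  have hcard : (Finset.univ.filter (fun i => hH.eigenvalues i < 0)).card = 1 := by
    rw [hH.roots_charpoly_eq_eigenvalues, Multiset.countP_map] at hHneg
    rw [← hHneg]
    rfl
  obtain ⟨k, hk⟩ := Finset.card_eq_one.1 hcard
  have hpos : ∀ i, i ≠ k → 0 < hH.eigenvalues i := by
    intro i hi
    refine lt_of_le_of_ne (not_lt.1 fun h => hi ?_) (hne i).symm
    have : i ∈ Finset.univ.filter (fun i => hH.eigenvalues i < 0) := by simp [h]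
    simpa [hk] using this
  set b := hH.eigenvectorBasis with hb
  -- Coordinates in the eigenbasis are plain dot products.
  have hin : ∀ (i : Fin d) (w : Fin d → ℝ), inner ℝ (b i) (WithLp.toLp 2 w) =
      (b i : Fin d → ℝ) ⬝ᵥ w := by
    intro i w
    simp [EuclideanSpace.inner_eq_star_dotProduct, dotProduct_comm]
  have hpar : ∀ w u : Fin d → ℝ,
      w ⬝ᵥ u = ∑ i, ((b i : Fin d → ℝ) ⬝ᵥ w) * ((b i : Fin d → ℝ) ⬝ᵥ u) := by
    intro w u
    have h := b.sum_inner_mul_inner (WithLp.toLp 2 w) (WithLp.toLp 2 u)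
    simp only [real_inner_comm (b _) (WithLp.toLp 2 w), hin] at h
    rw [h]
    simp [EuclideanSpace.inner_eq_star_dotProduct, dotProduct_comm]
  refine ⟨b k, fun z hz hvz => ?_⟩
  have hHz : ∀ i, (b i : Fin d → ℝ) ⬝ᵥ H *ᵥ z = hH.eigenvalues i * ((b i : Fin d → ℝ) ⬝ᵥ z) := by
    intro i
    rw [dotProduct_mulVec, ← mulVec_transpose, hHsymm.eq, hb, hH.mulVec_eigenvectorBasis,
      smul_dotProduct, smul_eq_mul]
  have hterm : ∀ i, 0 ≤ ((b i : Fin d → ℝ) ⬝ᵥ z) * ((b i : Fin d → ℝ) ⬝ᵥ H *ᵥ z) := by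
    intro i
    by_cases hi : i = k
    · rw [hi, hvz, zero_mul]
    · rw [hHz]
      nlinarith [mul_nonneg (hpos i hi).le (mul_self_nonneg ((b i : Fin d → ℝ) ⬝ᵥ z))]
  rw [hpar]
  refine lt_of_le_of_ne (Finset.sum_nonneg fun i _ => hterm i) fun h0 => hz ?_
  have hall := (Finset.sum_eq_zero_iff_of_nonneg fun i _ => hterm i).1 h0.symm
  have hcoord : ∀ i, (b i : Fin d → ℝ) ⬝ᵥ z = 0 := by
    intro i
    by_cases hi : i = k
    · rw [hi, hvz]
    · have h := hall i (Finset.mem_univ i)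
      rw [hHz] at h
      simpa [(hpos i hi).ne'] using h
  apply dotProduct_self_eq_zero.1
  rw [hpar]
  simp [hcoord]

/-- If a symmetric `H` is positive on the hyperplane `v^⊥` and `⟨η, H η⟩ < 0`, then `H` is positive
on the `H`-orthogonal complement of `η`: otherwise `η` and `y` would span a plane on which `H` is
nonpositive, and this plane meets `v^⊥` nontrivially. -/
lemma quad_pos_of_orthogonal {d : ℕ} {H : Matrix (Fin d) (Fin d) ℝ} (hHsymm : H.IsSymm)
    {v : Fin d → ℝ} (hv : ∀ z : Fin d → ℝ, z ≠ 0 → v ⬝ᵥ z = 0 → 0 < z ⬝ᵥ H *ᵥ z)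
    {η : Fin d → ℝ} (hη : η ⬝ᵥ H *ᵥ η < 0) {y : Fin d → ℝ} (hy : y ≠ 0)
    (hηy : η ⬝ᵥ H *ᵥ y = 0) : 0 < y ⬝ᵥ H *ᵥ y := by
  by_contra hQ
  have hyη : y ⬝ᵥ H *ᵥ η = 0 := by
    rw [dotProduct_mulVec, ← mulVec_transpose, hHsymm.eq, dotProduct_comm, hηy]
  have hvη : v ⬝ᵥ η ≠ 0 := by
    intro h
    have hη0 : η ≠ 0 := by rintro rfl; simp at hη
    linarith [hv η hη0 h]
  have hz : (v ⬝ᵥ η) • y - (v ⬝ᵥ y) • η = 0 := by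
    by_contra hz0
    have h := hv _ hz0 (by simp [dotProduct_sub, dotProduct_smul]; ring)
    simp only [mulVec_sub, mulVec_smul, dotProduct_sub, sub_dotProduct, dotProduct_smul,
      smul_dotProduct, smul_eq_mul, hyη, hηy] at h
    nlinarith [mul_nonneg (sq_nonneg (v ⬝ᵥ η)) (neg_nonneg.2 (not_lt.1 hQ)),
      mul_nonneg (sq_nonneg (v ⬝ᵥ y)) (neg_nonneg.2 hη.le)]
  have h := congrArg (fun w => η ⬝ᵥ H *ᵥ w) hz
  simp only [mulVec_sub, mulVec_smul, dotProduct_sub, dotProduct_smul, smul_eq_mul, hηy,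
    mulVec_zero, dotProduct_zero, mul_zero, zero_sub, neg_eq_zero, mul_eq_zero, hη.ne,
    or_false] at h
  rw [h, zero_smul, sub_zero] at hz
  exact hy ((smul_eq_zero.1 hz).resolve_left hvη)

/-- Adding `-2 / ⟨η, H η⟩` times the square of `⟨H η, x⟩` to the quadratic form of `H` reverses its
sign along `η` and leaves it unchanged on the `H`-orthogonal complement of `η`. -/
lemma quad_add_pos {d : ℕ} {H : Matrix (Fin d) (Fin d) ℝ} (hHsymm : H.IsSymm)
    {v : Fin d → ℝ} (hv : ∀ z : Fin d → ℝ, z ≠ 0 → v ⬝ᵥ z = 0 → 0 < z ⬝ᵥ H *ᵥ z)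
    {η : Fin d → ℝ} {μ : ℝ} (hμ : μ < 0) (hη : μ * (η ⬝ᵥ H *ᵥ η) = 1)
    {x : Fin d → ℝ} (hx : x ≠ 0) :
    0 < x ⬝ᵥ H *ᵥ x + 2 * |μ| * (η ⬝ᵥ H *ᵥ x) ^ 2 := by
  have hneg : η ⬝ᵥ H *ᵥ η < 0 := by nlinarith
  have hsymm : x ⬝ᵥ H *ᵥ η = η ⬝ᵥ H *ᵥ x := by
    rw [dotProduct_mulVec, ← mulVec_transpose, hHsymm.eq, dotProduct_comm]
  set q := η ⬝ᵥ H *ᵥ η with hq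
  set t := η ⬝ᵥ H *ᵥ x with ht
  rw [abs_of_neg hμ]
  -- `y` is the component of `x` in the `H`-orthogonal complement of `η`.
  set y := x - (μ * t) • η with hydef
  have hηy : η ⬝ᵥ H *ᵥ y = 0 := by
    simp only [hydef, mulVec_sub, mulVec_smul, dotProduct_sub, dotProduct_smul, smul_eq_mul,
      ← hq, ← ht]
    linear_combination (-t) * hη
  have hQy : y ⬝ᵥ H *ᵥ y = x ⬝ᵥ H *ᵥ x - μ * t ^ 2 := by
    simp only [hydef, mulVec_sub, mulVec_smul, dotProduct_sub, sub_dotProduct, dotProduct_smul,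
      smul_dotProduct, smul_eq_mul, ← hq, ← ht, hsymm]
    linear_combination (μ * t ^ 2) * hη
  by_cases hy : y = 0
  · have ht0 : t ≠ 0 := by
      intro h
      rw [hydef, h, mul_zero, zero_smul, sub_zero] at hy
      exact hx hy
    have h0 : x ⬝ᵥ H *ᵥ x - μ * t ^ 2 = 0 := by rw [← hQy, hy]; simp
    nlinarith [mul_pos_of_neg_of_neg hμ (neg_lt_zero.2 (pow_pos (abs_pos.2 ht0) 2)), sq_abs t]
  · have h := quad_pos_of_orthogonal hHsymm hv hneg hy hηy
    nlinarith [mul_nonneg (neg_nonneg.2 hμ.le) (sq_nonneg t)]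

/-- **Lemma 1.1, item 2.** Assume `p = 1`, let `μ < 0` be the unique (real) eigenvalue of
`H + Lᵀ` with negative real part and let `ξ` be a real unit eigenvector of `H + Lᵀ`
associated with `μ`.  Then the symmetric matrix `H + 2|μ| ξ ξᵀ` is positive definite and
its determinant equals `-det H`. -/
theorem stmt2 {d : ℕ} (hd : 1 ≤ d)
    (H L : Matrix (Fin d) (Fin d) ℝ)
    (hHsymm : H.IsSymm) (hHinv : IsUnit H.det)
    (hHneg : H.charpoly.roots.countP (fun x => x < 0) = 1)
    (hanti : (H * L)ᵀ = -(H * L))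
    (μ : ℝ) (hμneg : μ < 0)
    (hμroot : (μ : ℂ) ∈ ((H + Lᵀ).map Complex.ofReal).charpoly.roots)
    (hμuniq : (((H + Lᵀ).map Complex.ofReal).charpoly.roots.countP (fun z => z.re < 0)) = 1)
    (ξ : Fin d → ℝ) (hξunit : ∑ i, ξ i ^ 2 = 1)
    (hξ : (H + Lᵀ) *ᵥ ξ = μ • ξ) :
    (H + (2 * |μ|) • Matrix.vecMulVec ξ ξ).PosDef ∧
    (H + (2 * |μ|) • Matrix.vecMulVec ξ ξ).det = - H.det := by
  obtain ⟨v, hv⟩ := exists_hyperplane_quad_pos H hHsymm hHinv hHneg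
  set η := H⁻¹ *ᵥ ξ with hηdef
  have hHη : H *ᵥ η = ξ := by
    rw [hηdef, mulVec_mulVec, mul_nonsing_inv _ hHinv, one_mulVec]
  have hξξ : ξ ⬝ᵥ ξ = 1 := by
    rw [← hξunit]
    exact Finset.sum_congr rfl fun i _ => (sq (ξ i)).symm
  -- The antisymmetric matrix `(H L)ᵀ = Lᵀ H` has vanishing quadratic form.
  have hL : η ⬝ᵥ Lᵀ *ᵥ ξ = 0 := by
    have h1 : η ⬝ᵥ Lᵀ *ᵥ ξ = η ⬝ᵥ (H * L)ᵀ *ᵥ η := by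
      rw [transpose_mul, hHsymm.eq, ← mulVec_mulVec, hHη]
    have h2 : η ⬝ᵥ (H * L)ᵀ *ᵥ η = η ⬝ᵥ (H * L) *ᵥ η := by
      rw [dotProduct_mulVec, vecMul_transpose, dotProduct_comm]
    have h3 : η ⬝ᵥ (H * L)ᵀ *ᵥ η = -(η ⬝ᵥ (H * L) *ᵥ η) := by
      rw [hanti, neg_mulVec, dotProduct_neg]
    linarith
  have hHsa : ∀ x, η ⬝ᵥ H *ᵥ x = ξ ⬝ᵥ x := by
    intro x
    rw [dotProduct_mulVec, ← mulVec_transpose, hHsymm.eq, hHη]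
  have hη : μ * (η ⬝ᵥ H *ᵥ η) = 1 := by
    have h := congrArg (fun w => η ⬝ᵥ w) hξ
    simp only [add_mulVec, dotProduct_add, hL, hHsa, hξξ, dotProduct_smul, smul_eq_mul] at h
    rw [hHη]
    linarith
  refine ⟨PosDef.of_dotProduct_mulVec_pos ?_ fun x hx => ?_, ?_⟩
  · rw [Matrix.IsHermitian, conjTranspose_eq_transpose_of_trivial, transpose_add, transpose_smul,
      transpose_vecMulVec, hHsymm.eq]
  · have h := quad_add_pos hHsymm hv hμneg hη hx
    rw [hHsa] at h
    refine h.trans_eq ?_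
    simp only [star_trivial, add_mulVec, dotProduct_add, smul_mulVec, vecMulVec_mulVec,
      dotProduct_smul, smul_eq_mul, op_smul_eq_smul, dotProduct_comm x ξ]
    ring
  · have h1 : H + (2 * |μ|) • vecMulVec ξ ξ
        = H * (1 + replicateCol Unit ((2 * |μ|) • η) * replicateRow Unit ξ) := by
      rw [mul_add, mul_one, ← vecMulVec_eq, mul_vecMulVec, mulVec_smul, hHη, smul_vecMulVec]
    rw [h1, det_mul, det_one_add_replicateCol_mul_replicateRow, dotProduct_smul, smul_eq_mul,
      abs_of_neg hμneg]
    rw [hHη, dotProduct_comm] at hη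
    linear_combination (-2 * H.det) * hη
end

section
/- Assume p = 1, let μ < 0 be the unique (real) eigenvalue of H + Lᵀ with negative real part, let ξ ∈ ℝᵈ be a unit vector with (H + Lᵀ)ξ = μξ, and let λ < 0 be the unique negative eigenvalue of H. Then |μ| ≥ |λ|, and |μ| = |λ| if and only if Lᵀξ = 0. -/
/-!
The matrix `Lᵀ H` is antisymmetric, so for `η = H⁻¹ ξ` the quadratic form `⟨η, Lᵀ H η⟩ = ⟨η, Lᵀ ξ⟩`
vanishes. Pairing `H ξ + Lᵀ ξ = μ ξ` with `η` gives `1 = |ξ|² = μ ⟨η, ξ⟩`. On the other hand every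
eigenvalue `x` of `H` either equals `lam` or is nonnegative, so `x (x - lam) ≥ 0` and
`Q = H² - lam H` is positive semidefinite. Now `0 ≤ ⟨η, Q η⟩ = |ξ|² - lam ⟨η, ξ⟩ = 1 - lam / μ`,
which is the inequality. If equality holds, `Q η = 0`, i.e. `H ξ = lam ξ`, whence `Lᵀ ξ = 0`.
Conversely `Lᵀ ξ = 0` makes `μ` a negative eigenvalue of `H`, hence equal to `lam`.
-/

open Matrix Polynomial
open scoped Classical

lemma eq_of_countP_eq_one {α : Type*} {s : Multiset α} {P : α → Prop} [DecidablePred P]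
    (h : s.countP P = 1) {a b : α} (ha : a ∈ s) (hb : b ∈ s) (pa : P a) (pb : P b) : a = b := by
  rw [Multiset.countP_eq_card_filter, Multiset.card_eq_one] at h
  obtain ⟨c, hc⟩ := h
  have ha' : a ∈ s.filter P := Multiset.mem_filter.2 ⟨ha, pa⟩
  have hb' : b ∈ s.filter P := Multiset.mem_filter.2 ⟨hb, pb⟩
  rw [hc, Multiset.mem_singleton] at ha' hb'
  rw [ha', hb']

/-- If every eigenvalue `x` of `H` satisfies `x (x - c) ≥ 0`, the same holds for `H` itself in the
positive semidefinite order. -/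
lemma posSemidef_sq_sub_smul {d : ℕ} {H : Matrix (Fin d) (Fin d) ℝ} (hH : H.IsHermitian) (c : ℝ)
    (h : ∀ i, 0 ≤ hH.eigenvalues i * (hH.eigenvalues i - c)) : (H * H - c • H).PosSemidef := by
  obtain ⟨U, D, hU, hD, hHU⟩ : ∃ U D : Matrix (Fin d) (Fin d) ℝ, Uᴴ * U = 1 ∧
      D = diagonal hH.eigenvalues ∧ H = U * D * Uᴴ := by
    refine ⟨hH.eigenvectorUnitary, _, ?_, rfl, ?_⟩
    · exact Unitary.coe_star_mul_self hH.eigenvectorUnitary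
    · exact hH.spectral_theorem
  have hQ : H * H - c • H = U * (D * D - c • D) * Uᴴ := by
    have : U * D * Uᴴ * (U * D * Uᴴ) = U * (D * D) * Uᴴ := by
      calc _ = U * D * (Uᴴ * U) * D * Uᴴ := by simp only [Matrix.mul_assoc]
        _ = _ := by rw [hU]; simp only [Matrix.mul_assoc, Matrix.one_mul]
    rw [Matrix.mul_sub, Matrix.sub_mul, ← this, hHU]
    simp
  rw [hQ]
  refine PosSemidef.mul_mul_conjTranspose_same ?_ U
  have : D * D - c • D = diagonal fun i => hH.eigenvalues i * (hH.eigenvalues i - c) := by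
    rw [hD, diagonal_mul_diagonal, ← diagonal_smul, diagonal_sub]
    congr 1
    ext i
    simp
    ring
  rw [this]
  exact PosSemidef.diagonal h

theorem stmt3 {d : ℕ} (hd : 1 ≤ d)
    (H L : Matrix (Fin d) (Fin d) ℝ)
    (hHsymm : H.IsSymm) (hHinv : IsUnit H.det)
    (hHneg : H.charpoly.roots.countP (fun x => x < 0) = 1)
    (hanti : (H * L)ᵀ = -(H * L))
    (μ : ℝ) (hμneg : μ < 0)
    (hμroot : (μ : ℂ) ∈ ((H + Lᵀ).map Complex.ofReal).charpoly.roots)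
    (hμuniq : (((H + Lᵀ).map Complex.ofReal).charpoly.roots.countP (fun z => z.re < 0)) = 1)
    (ξ : Fin d → ℝ) (hξunit : ∑ i, ξ i ^ 2 = 1)
    (hξ : (H + Lᵀ) *ᵥ ξ = μ • ξ)
    (lam : ℝ) (hlamneg : lam < 0) (hlamroot : lam ∈ H.charpoly.roots) :
    |lam| ≤ |μ| ∧ (|μ| = |lam| ↔ Lᵀ *ᵥ ξ = 0) := by
  have hH : H.IsHermitian := by
    rw [IsHermitian, conjTranspose_eq_transpose_of_trivial]; exact hHsymm
  have hroot : ∀ (x : ℝ) (v : Fin d → ℝ), v ≠ 0 → H *ᵥ v = x • v → x ∈ H.charpoly.roots := by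
    intro x v hv hx
    rw [mem_roots H.charpoly_monic.ne_zero, ← Matrix.mem_spectrum_iff_isRoot_charpoly,
      ← spectrum_toLin', ← Module.End.hasEigenvalue_iff_mem_spectrum]
    exact Module.End.hasEigenvalue_of_hasEigenvector
      (Module.End.hasEigenvector_iff.2 ⟨Module.End.mem_eigenspace_iff.2 (by simpa using hx), hv⟩)
  have hQ : (H * H - lam • H).PosSemidef := by
    refine posSemidef_sq_sub_smul hH lam fun i => ?_
    have hi : hH.eigenvalues i ∈ H.charpoly.roots := by
      rw [hH.roots_charpoly_eq_eigenvalues]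
      simp
    rcases lt_or_ge (hH.eigenvalues i) 0 with hlt | hge
    · rw [eq_of_countP_eq_one hHneg hi hlamroot hlt hlamneg]; simp
    · exact mul_nonneg hge (by linarith)
  have hξξ : ξ ⬝ᵥ ξ = 1 := by
    rw [← hξunit]; simp [dotProduct, sq]
  have hξ0 : ξ ≠ 0 := by rintro rfl; simp at hξξ
  obtain ⟨η, hη⟩ : ∃ η, H *ᵥ η = ξ :=
    ⟨H⁻¹ *ᵥ ξ, by rw [mulVec_mulVec, mul_nonsing_inv H hHinv, one_mulVec]⟩
  have hsymm : ∀ v w : Fin d → ℝ, v ⬝ᵥ (H *ᵥ w) = (H *ᵥ v) ⬝ᵥ w := by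
    intro v w
    rw [dotProduct_mulVec, ← mulVec_transpose, hHsymm.eq]
  -- `Lᵀ H` is antisymmetric, so its quadratic form vanishes at `η`.
  have hLη : η ⬝ᵥ (Lᵀ *ᵥ ξ) = 0 := by
    have h1 : Lᵀ * H = -(H * L) := by rw [← hanti, transpose_mul, hHsymm.eq]
    have h2 : η ⬝ᵥ ((Lᵀ * H) *ᵥ η) = η ⬝ᵥ ((H * L) *ᵥ η) := by
      rw [dotProduct_mulVec, ← mulVec_transpose, transpose_mul, transpose_transpose, hHsymm.eq,
        dotProduct_comm]
    have h3 : η ⬝ᵥ ((Lᵀ * H) *ᵥ η) = -(η ⬝ᵥ ((H * L) *ᵥ η)) := by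
      rw [h1, neg_mulVec, dotProduct_neg]
    rw [← hη, mulVec_mulVec]
    linarith
  have hμη : μ * (η ⬝ᵥ ξ) = 1 := by
    have := congrArg (η ⬝ᵥ ·) hξ
    simp only [add_mulVec, dotProduct_add, hLη, dotProduct_smul, smul_eq_mul, hsymm, hη, hξξ]
      at this
    linarith
  have hQη : (H * H - lam • H) *ᵥ η = H *ᵥ ξ - lam • ξ := by
    rw [sub_mulVec, ← mulVec_mulVec, smul_mulVec, hη]
  have hform : η ⬝ᵥ ((H * H - lam • H) *ᵥ η) = 1 - lam * (η ⬝ᵥ ξ) := by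
    rw [hQη, dotProduct_sub, hsymm, hη, hξξ, dotProduct_smul, smul_eq_mul]
  have hle : μ ≤ lam := by
    have h0 : 0 ≤ η ⬝ᵥ ((H * H - lam • H) *ᵥ η) := by
      simpa using hQ.dotProduct_mulVec_nonneg η
    rw [hform] at h0
    have : μ * (1 - lam * (η ⬝ᵥ ξ)) = μ - lam := by linear_combination -lam * hμη
    nlinarith
  rw [abs_of_neg hμneg, abs_of_neg hlamneg]
  refine ⟨by linarith, fun h => ?_, fun h => ?_⟩
  · have hμlam : μ = lam := by linarith
    have hz : (H * H - lam • H) *ᵥ η = 0 := by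
      rw [← hQ.dotProduct_mulVec_zero_iff]
      rw [star_trivial, hform, ← hμlam, hμη, sub_self]
    rw [hQη, sub_eq_zero] at hz
    rw [add_mulVec, hz, hμlam] at hξ
    simpa using hξ
  · rw [add_mulVec, h, add_zero] at hξ
    rw [eq_of_countP_eq_one hHneg (hroot μ ξ hξ0 hξ) hlamroot hμneg hlamneg]
end

section
/- If ℓ is continuous at z, then ℓ(z) = 0. That is, a vector field everywhere orthogonal to the gradient of f must vanish at every nondegenerate critical point of f. -/
open scoped RealInnerProductSpace

/-!
Surjectivity of the Hessian provides a direction `v` with `Hess v = ℓ z`. Along the line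
`z + t • v`, orthogonality gives `⟪ℓ (z + t • v), t⁻¹ • ∇f (z + t • v)⟫ = 0` for small `t ≠ 0`.
As `t → 0`, since `∇f z = 0` and `ℓ` is continuous at `z`, the left side tends to
`⟪ℓ z, Hess v⟫ = ‖ℓ z‖ ^ 2`.
-/

/-- If `ℓ` is everywhere orthogonal to the gradient of `f` near a nondegenerate critical
point `z` of `f` and `ℓ` is continuous at `z`, then `ℓ z = 0`. -/
theorem stmt4 {d : ℕ} (z : EuclideanSpace ℝ (Fin d))
    (f : EuclideanSpace ℝ (Fin d) → ℝ)
    (ℓ : EuclideanSpace ℝ (Fin d) → EuclideanSpace ℝ (Fin d))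
    (U : Set (EuclideanSpace ℝ (Fin d))) (hU : U ∈ nhds z)
    (hf : ∀ x ∈ U, DifferentiableAt ℝ f x)
    (hcrit : gradient f z = 0)
    (Hess : EuclideanSpace ℝ (Fin d) →L[ℝ] EuclideanSpace ℝ (Fin d))
    (hHess : HasFDerivAt (gradient f) Hess z)
    (hHessInv : Function.Bijective Hess)
    (hortho : ∀ x ∈ U, ⟪ℓ x, gradient f x⟫ = 0)
    (hcont : ContinuousAt ℓ z) :
    ℓ z = 0 := by
  obtain ⟨v, hv⟩ := hHessInv.surjective (ℓ z)
  have hgrad := (hHess.hasLineDerivAt v).tendsto_slope_zero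
  rw [hcrit, hv] at hgrad
  have hline : Filter.Tendsto (fun t : ℝ => z + t • v) (nhdsWithin 0 {0}ᶜ) (nhds z) := by
    have h : ContinuousAt (fun t : ℝ => z + t • v) 0 := by fun_prop
    simpa using h.tendsto.mono_left nhdsWithin_le_nhds
  have hlim := (hcont.tendsto.comp hline).inner (𝕜 := ℝ) hgrad
  have hzero : (fun t : ℝ => ⟪(ℓ ∘ fun t : ℝ => z + t • v) t,
      t⁻¹ • (gradient f (z + t • v) - 0)⟫) =ᶠ[nhdsWithin 0 {0}ᶜ] fun _ => (0 : ℝ) := by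
    filter_upwards [hline hU] with t ht
    simp [inner_smul_right, hortho _ ht]
  exact inner_self_eq_zero.mp
    (tendsto_nhds_unique (hlim.congr' hzero) tendsto_const_nhds)
end

section
/- If ℓ is continuous near z and differentiable at z, then the matrix Hess f(z) · Jac ℓ(z) is antisymmetric, i.e. (Hess f(z) · Jac ℓ(z))ᵀ = −Hess f(z) · Jac ℓ(z), where Jac ℓ(z) is the Jacobian matrix of ℓ at z. -/
/-!
Write `g x = ⟪ℓ x, ∇f x⟫`, which vanishes near `z`. Its first derivative at `z` in the direction
`u` is `⟪ℓ z, Hess u⟫`, because `∇f z = 0`; as `Hess` is onto, this forces `ℓ z = 0`. Then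
`g (z + t u) / t²` is the inner product of the difference quotients of `ℓ` and `∇f`, so letting
`t → 0` gives `⟪Jac u, Hess u⟫ = 0` for every `u`. Polarization together with the symmetry of the
Hessian yields the claim.
-/

open scoped RealInnerProductSpace

/-- Symmetry of second derivatives, for a function with a gradient differentiable at one point. -/
lemma inner_hess_symm {d : ℕ} {z : EuclideanSpace ℝ (Fin d)}
    {f : EuclideanSpace ℝ (Fin d) → ℝ}
    (hf : ∀ᶠ x in nhds z, DifferentiableAt ℝ f x)
    {Hess : EuclideanSpace ℝ (Fin d) →L[ℝ] EuclideanSpace ℝ (Fin d)}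
    (hHess : HasFDerivAt (gradient f) Hess z) (u v : EuclideanSpace ℝ (Fin d)) :
    ⟪Hess u, v⟫ = ⟪Hess v, u⟫ := by
  -- the inner product as a genuinely linear (rather than conjugate-linear) map into the dual
  let B : EuclideanSpace ℝ (Fin d) →L[ℝ] EuclideanSpace ℝ (Fin d) →L[ℝ] ℝ :=
    (isBoundedBilinearMap_inner (𝕜 := ℝ) (E := EuclideanSpace ℝ (Fin d))).toContinuousLinearMap
  have h1 : ∀ᶠ x in nhds z, HasFDerivAt f (B (gradient f x)) x := by
    filter_upwards [hf] with x hx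
    exact hx.hasGradientAt.hasFDerivAt
  have h2 : HasFDerivAt (fun x => B (gradient f x)) (B.comp Hess) z :=
    B.hasFDerivAt.comp z hHess
  exact second_derivative_symmetric_of_eventually h1 h2 u v

/-- When `a` and `b` vanish at `z`, `⟪A u, B u⟫` is the limit of `⟪a (z + t u), b (z + t u)⟫ / t²` as
`t → 0`, so it is zero if `a` and `b` are orthogonal near `z`. -/
lemma inner_deriv_eq_zero {E : Type*} [NormedAddCommGroup E] [InnerProductSpace ℝ E]
    {a b : E → E} {A B : E →L[ℝ] E} {z : E} (ha : HasFDerivAt a A z) (hb : HasFDerivAt b B z)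
    (ha0 : a z = 0) (hb0 : b z = 0) (hab : ∀ᶠ x in nhds z, ⟪a x, b x⟫ = 0) (u : E) :
    ⟪A u, B u⟫ = 0 := by
  have hlim := (ha.hasLineDerivAt u).tendsto_slope_zero.inner
    (𝕜 := ℝ) (hb.hasLineDerivAt u).tendsto_slope_zero
  have hline : Filter.Tendsto (fun t : ℝ => z + t • u) (nhdsWithin 0 {0}ᶜ) (nhds z) := by
    have : Continuous fun t : ℝ => z + t • u := by fun_prop
    exact (this.tendsto' 0 z (by simp)).mono_left nhdsWithin_le_nhds
  refine tendsto_nhds_unique hlim (tendsto_const_nhds.congr' ?_)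
  filter_upwards [hline.eventually hab] with t ht
  simp [ha0, hb0, inner_smul_left, inner_smul_right, ht]

/-- At a nondegenerate critical point `z` of `f`, if `ℓ` is orthogonal to `∇f` near `z`,
is continuous near `z` and differentiable at `z`, then the composition
`Hess f(z) ∘ Jac ℓ(z)` is antisymmetric:  `⟪Hess (Jac u), v⟫ = - ⟪u, Hess (Jac v)⟫`
for all `u, v`. -/
theorem stmt5 {d : ℕ} (z : EuclideanSpace ℝ (Fin d))
    (f : EuclideanSpace ℝ (Fin d) → ℝ)
    (ℓ : EuclideanSpace ℝ (Fin d) → EuclideanSpace ℝ (Fin d))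
    (U : Set (EuclideanSpace ℝ (Fin d))) (hU : U ∈ nhds z)
    (hf : ∀ x ∈ U, DifferentiableAt ℝ f x)
    (hcrit : gradient f z = 0)
    (Hess : EuclideanSpace ℝ (Fin d) →L[ℝ] EuclideanSpace ℝ (Fin d))
    (hHess : HasFDerivAt (gradient f) Hess z)
    (hHessInv : Function.Bijective Hess)
    (hortho : ∀ x ∈ U, ⟪ℓ x, gradient f x⟫ = 0)
    (hcont : ContinuousOn ℓ U)
    (Jac : EuclideanSpace ℝ (Fin d) →L[ℝ] EuclideanSpace ℝ (Fin d))
    (hJac : HasFDerivAt ℓ Jac z) :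
    ∀ u v : EuclideanSpace ℝ (Fin d), ⟪Hess (Jac u), v⟫ = - ⟪u, Hess (Jac v)⟫ := by
  have hU' : ∀ᶠ x in nhds z, x ∈ U := hU
  have hg : ∀ᶠ x in nhds z, ⟪ℓ x, gradient f x⟫ = 0 := hU'.mono hortho
  have hl0 : ℓ z = 0 := by
    obtain ⟨w, hw⟩ := hHessInv.surjective (ℓ z)
    have h1 := (hJac.inner ℝ hHess).congr_of_eventuallyEq
      (f₁ := fun _ => (0 : ℝ)) (hg.mono fun x hx => hx.symm)
    have h2 := congrArg (fun L => L w) (h1.unique (hasFDerivAt_const (0 : ℝ) z))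
    simpa [hcrit, hw] using h2
  have hdiag := inner_deriv_eq_zero hJac hHess hl0 hcrit hg
  intro u v
  have hsum := hdiag (u + v)
  simp only [map_add, inner_add_left, inner_add_right, hdiag u, hdiag v] at hsum
  have hsymm := inner_hess_symm (hU'.mono hf) hHess
  have e1 := hsymm (Jac u) v
  have e2 := hsymm (Jac v) u
  rw [real_inner_comm] at e1 e2
  rw [real_inner_comm (Jac u) (Hess v)] at e1
  rw [real_inner_comm (Jac v) (Hess u)] at e2
  rw [real_inner_comm]
  linarith
end

section
/- If ℓ is continuous near z and differentiable at z, then the divergence of ℓ vanishes at z: div ℓ(z) = Tr(Jac ℓ(z)) = 0. -/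
/-!
Write `H` for the Hessian and `J` for the Jacobian of `ℓ` at `z`. The product `⟪ℓ, ∇f⟫` vanishes
near `z`, so its derivative `w ↦ ⟪ℓ z, H w⟫` at `z` is zero, and surjectivity of `H` gives
`ℓ z = 0`. Both factors are now zero at `z`, so dividing each by `t` along a line `t ↦ z + t v` and
letting `t → 0` yields the second-order condition `⟪J v, H v⟫ = 0` for all `v`
(`inner_fderiv_eq_zero`): the bilinear form `(v, w) ↦ ⟪J v, H w⟫` is alternating. As `H` is
symmetric, this says that the adjoint of `J` is `-H J H⁻¹`, which has trace `-tr J`; since `J` and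
its adjoint have equal trace, `tr J = 0` (`trace_eq_zero_of_inner_eq_zero`).
-/

open scoped RealInnerProductSpace

section Helpers

variable {E : Type*} [NormedAddCommGroup E] [InnerProductSpace ℝ E]

/-- If two functions vanish at `z` and are orthogonal to each other near `z`, then the leading
(second-order) term of their inner product vanishes. -/
lemma inner_fderiv_eq_zero {g h : E → E} {g' h' : E →L[ℝ] E} {z : E}
    (hg : HasFDerivAt g g' z) (hh : HasFDerivAt h h' z) (hg0 : g z = 0) (hh0 : h z = 0)
    (horth : ∀ᶠ x in nhds z, ⟪g x, h x⟫ = 0) (v : E) : ⟪g' v, h' v⟫ = 0 := by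
  have hlim := (hg.hasLineDerivAt v).tendsto_slope_zero.inner (𝕜 := ℝ)
    (hh.hasLineDerivAt v).tendsto_slope_zero
  have hline : Filter.Tendsto (fun t : ℝ => z + t • v) (nhdsWithin 0 {0}ᶜ) (nhds z) := by
    have hc : Continuous (fun t : ℝ => z + t • v) := by fun_prop
    exact (hc.tendsto' 0 z (by simp)).mono_left nhdsWithin_le_nhds
  refine tendsto_nhds_unique (hlim.congr' ?_) tendsto_const_nhds
  filter_upwards [hline.eventually horth] with t ht
  simp [hg0, hh0, inner_smul_left, inner_smul_right, ht]

/-- If `H` is symmetric and invertible and `⟪J v, H v⟫ = 0` for all `v`, then the adjoint of `J` is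
`-H J H⁻¹`, so `J` is traceless. -/
lemma trace_eq_zero_of_inner_eq_zero [FiniteDimensional ℝ E] (J : E →ₗ[ℝ] E) (H : E ≃ₗ[ℝ] E)
    (hsymm : ∀ v w, ⟪H v, w⟫ = ⟪v, H w⟫) (halt : ∀ v, ⟪J v, H v⟫ = 0) :
    LinearMap.trace ℝ E J = 0 := by
  have hanti (v w : E) : ⟪J v, H w⟫ = -⟪J w, H v⟫ := by
    have h := halt (v + w)
    simp only [map_add, inner_add_left, inner_add_right, halt] at h
    linarith
  let b := stdOrthonormalBasis ℝ E
  have hneg : LinearMap.trace ℝ E (H.conj J) = -LinearMap.trace ℝ E J := by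
    rw [LinearMap.trace_eq_sum_inner _ b, LinearMap.trace_eq_sum_inner _ b,
      ← Finset.sum_neg_distrib]
    refine Finset.sum_congr rfl fun i _ => ?_
    rw [LinearEquiv.conj_apply_apply, ← hsymm, real_inner_comm, hanti, H.apply_symm_apply,
      real_inner_comm]
  rw [LinearMap.trace_conj'] at hneg
  linarith

/-- The derivative of the gradient is symmetric, by symmetry of second derivatives. -/
lemma inner_hessian_comm [CompleteSpace E] {f : E → ℝ} {z : E} {H : E →L[ℝ] E}
    (hf : ∀ᶠ x in nhds z, DifferentiableAt ℝ f x) (hH : HasFDerivAt (gradient f) H z)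
    (v w : E) : ⟪H v, w⟫ = ⟪v, H w⟫ := by
  have hD : HasFDerivAt (fderiv ℝ f)
      ((InnerProductSpace.toDualMap ℝ E).toContinuousLinearMap ∘L H) z := by
    have h := (InnerProductSpace.toDualMap ℝ E).toContinuousLinearMap.hasFDerivAt.comp z hH
    rwa [show (InnerProductSpace.toDualMap ℝ E).toContinuousLinearMap ∘ gradient f = fderiv ℝ f from
      toDual_comp_gradient] at h
  have h := second_derivative_symmetric_of_eventually (hf.mono fun _ hx => hx.hasFDerivAt) hD v w
  rw [← real_inner_comm v]
  exact h

end Helpers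

/-- At a nondegenerate critical point `z` of `f`, if `ℓ` is orthogonal to `∇f` near `z`,
is continuous near `z` and differentiable at `z`, then the divergence of `ℓ` vanishes at
`z`, i.e. the trace of the Jacobian `Jac ℓ(z)` is zero. -/
theorem stmt6 {d : ℕ} (z : EuclideanSpace ℝ (Fin d))
    (f : EuclideanSpace ℝ (Fin d) → ℝ)
    (ℓ : EuclideanSpace ℝ (Fin d) → EuclideanSpace ℝ (Fin d))
    (U : Set (EuclideanSpace ℝ (Fin d))) (hU : U ∈ nhds z)
    (hf : ∀ x ∈ U, DifferentiableAt ℝ f x)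
    (hcrit : gradient f z = 0)
    (Hess : EuclideanSpace ℝ (Fin d) →L[ℝ] EuclideanSpace ℝ (Fin d))
    (hHess : HasFDerivAt (gradient f) Hess z)
    (hHessInv : Function.Bijective Hess)
    (hortho : ∀ x ∈ U, ⟪ℓ x, gradient f x⟫ = 0)
    (hcont : ContinuousOn ℓ U)
    (Jac : EuclideanSpace ℝ (Fin d) →L[ℝ] EuclideanSpace ℝ (Fin d))
    (hJac : HasFDerivAt ℓ Jac z) :
    LinearMap.trace ℝ (EuclideanSpace ℝ (Fin d))
      (Jac : EuclideanSpace ℝ (Fin d) →ₗ[ℝ] EuclideanSpace ℝ (Fin d)) = 0 := by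
  have hz : ℓ z = 0 := by
    have h0 : HasFDerivAt (fun x => ⟪ℓ x, gradient f x⟫)
        (0 : EuclideanSpace ℝ (Fin d) →L[ℝ] ℝ) z :=
      (hasFDerivAt_const (0 : ℝ) z).congr_of_eventuallyEq (Filter.eventually_of_mem hU hortho)
    have hprod := (hJac.inner ℝ hHess).unique h0
    obtain ⟨w, hw⟩ := hHessInv.2 (ℓ z)
    have h := DFunLike.congr_fun hprod w
    simpa [hcrit, hw] using h
  exact trace_eq_zero_of_inner_eq_zero _
    (LinearEquiv.ofBijective (Hess : EuclideanSpace ℝ (Fin d) →ₗ[ℝ] EuclideanSpace ℝ (Fin d))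
      hHessInv)
    (inner_hessian_comm (Filter.eventually_of_mem hU hf) hHess)
    (inner_fderiv_eq_zero hJac hHess hz hcrit (Filter.eventually_of_mem hU hortho))
end

section
/- Assume in addition that f is twice continuously differentiable and ℓ is continuously differentiable (so that b is locally Lipschitz). Let φ : [0,∞) → E satisfy φ'(t) = b(φ(t)) for all t ≥ 0, and assume the forward orbit {φ(t) : t ≥ 0} is contained in a compact set. Then every ω-limit point of the trajectory is a critical point of f: if s_n → +∞ and φ(s_n) → y, then ∇f(y) = 0. -/
/-!
`f` is a strict Lyapunov function: along the trajectory `d/dt f(φ(t)) = -‖∇f(φ(t))‖²`, because the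
`ℓ`-component of the field is orthogonal to `∇f`. Hence `f ∘ φ` is nonincreasing on `[0, ∞)`, and as
`f(φ(s n)) → f(y)` with `s n → ∞`, it stays above `f(y)`.

If `∇f(y) ≠ 0`, then `‖∇f‖²` exceeds some `c > 0` on a ball around `y`. The trajectory has bounded
speed (it lives in a compact set), so after each time `s n` with `φ(s n)` close to `y` it remains in
that ball for a time `τ > 0` independent of `n`, during which `f` drops by at least `c τ`. Thus
`f(y) ≤ f(φ(s n)) - c τ → f(y) - c τ`, a contradiction. This uses no invariance of the ω-limit set,
and no continuous dependence on initial data.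
-/

open Filter
open scoped RealInnerProductSpace Topology

/-- Every ω-limit point of a forward-bounded trajectory of `ẋ = b(x)`, with
`b = -(∇f + ℓ)` and `ℓ ⊥ ∇f`, is a critical point of `f`. -/
theorem stmt9 {d : ℕ}
    (f : EuclideanSpace ℝ (Fin d) → ℝ)
    (ℓ b : EuclideanSpace ℝ (Fin d) → EuclideanSpace ℝ (Fin d))
    (hf : ContDiff ℝ 2 f) (hl : ContDiff ℝ 1 ℓ)
    (hortho : ∀ x, ⟪ℓ x, gradient f x⟫ = 0)
    (hb : b = fun x => -(gradient f x + ℓ x))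
    (φ : ℝ → EuclideanSpace ℝ (Fin d))
    (hφ : ∀ t, 0 ≤ t → HasDerivAt φ (b (φ t)) t)
    (K : Set (EuclideanSpace ℝ (Fin d))) (hK : IsCompact K)
    (hφK : ∀ t, 0 ≤ t → φ t ∈ K)
    (s : ℕ → ℝ) (hs0 : ∀ n, 0 ≤ s n) (hs : Tendsto s atTop atTop)
    (y : EuclideanSpace ℝ (Fin d))
    (hconv : Tendsto (fun n => φ (s n)) atTop (𝓝 y)) :
    gradient f y = 0 := by
  have hgc : Continuous (gradient f) :=
    (InnerProductSpace.toDual ℝ (EuclideanSpace ℝ (Fin d))).symm.continuous.comp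
      (hf.continuous_fderiv (by norm_num))
  have hbc : Continuous b := by
    rw [hb]
    exact (hgc.add hl.continuous).neg
  have hV : ∀ t, 0 ≤ t → HasDerivAt (fun t => f (φ t)) (-‖gradient f (φ t)‖ ^ 2) t := by
    intro t ht
    have hg := ((hf.differentiable (by norm_num)) (φ t)).hasGradientAt.hasFDerivAt
    have h := hg.comp_hasDerivAt t (hφ t ht)
    refine h.congr_deriv ?_
    rw [InnerProductSpace.toDual_apply_apply, hb]
    simp only [inner_neg_right, inner_add_right, real_inner_self_eq_norm_sq]
    rw [real_inner_comm, hortho, add_zero]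
  have hdrop : ∀ (c p q : ℝ), 0 ≤ p → p ≤ q →
      (∀ t ∈ Set.Icc p q, c ≤ ‖gradient f (φ t)‖ ^ 2) →
      f (φ q) - f (φ p) ≤ -c * (q - p) := by
    intro c p q hp hpq hc
    refine (convex_Icc p q).image_sub_le_mul_sub_of_deriv_le (f := fun t => f (φ t))
      (fun t ht => (hV t (hp.trans ht.1)).continuousAt.continuousWithinAt)
      (fun t ht => (hV t (hp.trans (interior_subset ht).1)).differentiableAt.differentiableWithinAt)
      (fun t ht => ?_) p ⟨le_rfl, hpq⟩ q ⟨hpq, le_rfl⟩ hpq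
    have ht' := interior_subset ht
    rw [(hV t (hp.trans ht'.1)).deriv]
    exact neg_le_neg (hc t ht')
  have hVs : Tendsto (fun n => f (φ (s n))) atTop (𝓝 (f y)) :=
    (hf.continuous.tendsto y).comp hconv
  have hlow : ∀ t, 0 ≤ t → f y ≤ f (φ t) := by
    intro t ht
    refine le_of_tendsto hVs ?_
    filter_upwards [hs.eventually_ge_atTop t] with n hn
    have := hdrop 0 t (s n) ht hn (fun _ _ => by positivity)
    linarith
  by_contra hy
  obtain ⟨M, hM⟩ := hK.exists_bound_of_continuousOn hbc.continuousOn
  have hy2 : 0 < ‖gradient f y‖ ^ 2 := by positivity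
  set c := ‖gradient f y‖ ^ 2 / 2 with hc
  have hc0 : 0 < c := half_pos hy2
  have hnear : ∀ᶠ x in 𝓝 y, c < ‖gradient f x‖ ^ 2 :=
    (hgc.norm.pow 2).continuousAt.eventually_const_lt (half_lt_self hy2)
  obtain ⟨r, hr, hball⟩ := Metric.eventually_nhds_iff.1 hnear
  -- `|M| + 1` rather than `M`: the speed bound must be positive to divide by it.
  set τ := r / 2 / (|M| + 1) with hτ
  have hτ0 : 0 < τ := by positivity
  have hτM : (|M| + 1) * τ = r / 2 := by
    rw [hτ]
    field_simp
  have hspeed : ∀ p t, 0 ≤ p → p ≤ t → ‖φ t - φ p‖ ≤ (|M| + 1) * (t - p) := by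
    intro p t hp hpt
    have h := (convex_Ici (0 : ℝ)).norm_image_sub_le_of_norm_hasDerivWithin_le
      (f := φ) (C := |M| + 1) (fun u hu => (hφ u hu).hasDerivWithinAt)
      (fun u hu => (hM _ (hφK u hu)).trans ((le_abs_self M).trans (by linarith)))
      (show p ∈ Set.Ici 0 from hp) (show t ∈ Set.Ici 0 from hp.trans hpt)
    rwa [Real.norm_of_nonneg (sub_nonneg.2 hpt)] at h
  have hle : f y ≤ f y - c * τ := by
    refine ge_of_tendsto (hVs.sub_const (c * τ)) ?_
    filter_upwards [hconv.eventually (Metric.ball_mem_nhds y (half_pos hr))] with n hn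
    have h1 := hdrop c (s n) (s n + τ) (hs0 n) (by linarith) fun t ht => by
      refine (hball ?_).le
      have h2 := hspeed (s n) t (hs0 n) ht.1
      have h3 : (|M| + 1) * (t - s n) ≤ (|M| + 1) * τ :=
        mul_le_mul_of_nonneg_left (by linarith [ht.2]) (by positivity)
      have h4 := dist_triangle (φ t) (φ (s n)) y
      rw [dist_eq_norm (φ t) (φ (s n))] at h4
      have h5 : dist (φ (s n)) y < r / 2 := hn
      linarith
    have h6 := hlow (s n + τ) (by linarith [hs0 n])
    linarith
  linarith [mul_pos hc0 hτ0]
end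

section
/- Assume in addition that f is twice continuously differentiable, ℓ is continuously differentiable, and the critical points of f (points where ∇f vanishes) are isolated. Let φ : [0,∞) → E satisfy φ'(t) = b(φ(t)) for all t ≥ 0, with the forward orbit {φ(t) : t ≥ 0} contained in a compact set. Then there exists a single point y with ∇f(y) = 0 such that φ(t) → y as t → +∞ (the ω-limit set of the trajectory is the singleton {y}). -/
open Filter
open scoped RealInnerProductSpace Topology

/-!
Since `ℓ ⊥ ∇f`, the function `f` decreases along a trajectory at the rate `‖∇f‖²`. A bounded
trajectory stays in a compact set, on which `f` is bounded and `b` is bounded, so `f ∘ φ`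
converges and `φ` is Lipschitz. A Barbalat-type argument (`tendsto_zero_of_hasDerivAt_neg`) then
shows that `‖∇f (φ t)‖² → 0`; hence every cluster point of `φ` at `+∞` is a critical point of `f`.

A cluster point `y` exists by compactness. For all small `r > 0` the sphere of radius `r` about `y`
contains no critical point, so by compactness the trajectory eventually avoids this sphere. As it
returns infinitely often to the ball of radius `r`, by the intermediate value theorem it eventually
remains in that ball (`eventually_dist_lt_of_no_mapClusterPt`).
-/

/-- Barbalat's lemma in a form suited to Lyapunov functions: if `F' = -g` on `[0, ∞)`, `F` converges
at `+∞`, and `g` is uniformly continuous on `[0, ∞)`, then `g → 0`. The lower bound `0 ≤ g` makes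
it enough to bound `g` from above. -/
lemma tendsto_zero_of_hasDerivAt_neg {F g : ℝ → ℝ} {L : ℝ}
    (hF : ∀ t, 0 ≤ t → HasDerivAt F (-g t) t) (hL : Tendsto F atTop (𝓝 L))
    (hg : UniformContinuousOn g (Set.Ici 0)) (hg0 : ∀ t, 0 ≤ g t) :
    Tendsto g atTop (𝓝 0) := by
  rw [Metric.tendsto_nhds]
  intro ε hε
  obtain ⟨δ, hδ, hgδ⟩ := Metric.uniformContinuousOn_iff.1 hg (ε / 2) (half_pos hε)
  have hdiff : Tendsto (fun t => F t - F (t + δ / 2)) atTop (𝓝 0) := by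
    simpa using hL.sub (hL.comp (tendsto_atTop_add_const_right _ (δ / 2) tendsto_id))
  have hev := hdiff.eventually_lt_const (show (0 : ℝ) < δ / 2 * (ε / 2) by positivity)
  filter_upwards [hev, eventually_ge_atTop 0] with t ht ht0
  obtain ⟨s, ⟨hs1, hs2⟩, hs⟩ := exists_hasDerivAt_eq_slope F (fun t => -g t)
    (show t < t + δ / 2 by linarith)
    (fun u hu => (hF u (ht0.trans hu.1)).continuousAt.continuousWithinAt)
    (fun u hu => hF u (ht0.trans hu.1.le))
  have hgs : g s < ε / 2 := by
    have h2 : (0 : ℝ) < δ / 2 := half_pos hδ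
    rw [add_sub_cancel_left, eq_div_iff h2.ne'] at hs
    nlinarith
  have hts := hgδ t ht0 s (ht0.trans hs1.le) (by
    rw [Real.dist_eq, abs_lt]; constructor <;> linarith)
  rw [Real.dist_eq, abs_lt] at hts
  rw [Real.dist_eq, sub_zero, abs_of_nonneg (hg0 t)]
  linarith [hts.2]

/-- A continuous curve in a compact set that returns infinitely often near `y` but has no cluster
point on the sphere of radius `r` about `y` is eventually trapped in the ball. -/
lemma eventually_dist_lt_of_no_mapClusterPt {X : Type*} [MetricSpace X] {φ : ℝ → X} {K : Set X}
    (hK : IsCompact K) (hφ : ContinuousOn φ (Set.Ici 0)) (hφK : ∀ t, 0 ≤ t → φ t ∈ K)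
    {y : X} (hy : MapClusterPt y atTop φ) {r : ℝ} (hr : 0 < r)
    (hS : ∀ z, dist z y = r → ¬ MapClusterPt z atTop φ) :
    ∀ᶠ t in atTop, dist (φ t) y < r := by
  have havoid : ∀ᶠ t in atTop, dist (φ t) y ≠ r := by
    by_contra hcon
    have hfreq : ∃ᶠ t in atTop, φ t ∈ K ∩ Metric.sphere y r := by
      refine ((not_eventually.1 hcon).and_eventually (eventually_ge_atTop 0)).mono ?_
      rintro t ⟨ht, ht0⟩
      exact ⟨hφK t ht0, not_not.1 ht⟩
    obtain ⟨z, hz, hzc⟩ :=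
      (hK.inter_right Metric.isClosed_sphere).exists_mapClusterPt_of_frequently hfreq
    exact hS z hz.2 hzc
  obtain ⟨T, hT⟩ := eventually_atTop.1 havoid
  obtain ⟨t₀, ht₀, hball⟩ :=
    (frequently_atTop.1 (hy.frequently (Metric.ball_mem_nhds y hr))) (max T 0)
  filter_upwards [eventually_ge_atTop t₀] with t ht
  by_contra! hge
  have hcont : ContinuousOn (fun s => dist (φ s) y) (Set.Icc t₀ t) :=
    (continuous_id.dist continuous_const).comp_continuousOn
      (hφ.mono fun s hs => ((le_max_right T 0).trans ht₀).trans hs.1)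
  obtain ⟨s, hs, hsr⟩ := intermediate_value_Icc ht hcont ⟨(Metric.mem_ball.1 hball).le, hge⟩
  exact hT s (((le_max_left T 0).trans ht₀).trans hs.1) hsr

/-- If the critical points of `f` are isolated, every forward-bounded trajectory of
`ẋ = b(x)`, with `b = -(∇f + ℓ)` and `ℓ ⊥ ∇f`, converges to a single critical point of
`f` as `t → +∞`. -/
theorem stmt10 {d : ℕ}
    (f : EuclideanSpace ℝ (Fin d) → ℝ)
    (ℓ b : EuclideanSpace ℝ (Fin d) → EuclideanSpace ℝ (Fin d))
    (hf : ContDiff ℝ 2 f) (hl : ContDiff ℝ 1 ℓ)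
    (hortho : ∀ x, ⟪ℓ x, gradient f x⟫ = 0)
    (hb : b = fun x => -(gradient f x + ℓ x))
    (hiso : ∀ z, gradient f z = 0 →
      ∃ ε > 0, ∀ y, y ≠ z → dist y z < ε → gradient f y ≠ 0)
    (φ : ℝ → EuclideanSpace ℝ (Fin d))
    (hφ : ∀ t, 0 ≤ t → HasDerivAt φ (b (φ t)) t)
    (K : Set (EuclideanSpace ℝ (Fin d))) (hK : IsCompact K)
    (hφK : ∀ t, 0 ≤ t → φ t ∈ K) :
    ∃ y, gradient f y = 0 ∧ Tendsto φ atTop (𝓝 y) := by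
  have hgrad : Continuous (gradient f) :=
    (InnerProductSpace.toDual ℝ _).symm.continuous.comp (hf.continuous_fderiv (by norm_num))
  have hbc : Continuous b := by rw [hb]; exact (hgrad.add hl.continuous).neg
  have hG : Continuous fun x => ‖gradient f x‖ ^ 2 := hgrad.norm.pow 2
  have hφc : ContinuousOn φ (Set.Ici 0) := fun t ht => (hφ t ht).continuousAt.continuousWithinAt
  have hF : ∀ t, 0 ≤ t → HasDerivAt (fun t => f (φ t)) (-‖gradient f (φ t)‖ ^ 2) t := by
    intro t ht
    have h := ((hf.differentiable (by norm_num)) (φ t)).hasGradientAt.hasFDerivAt.comp_hasDerivAt t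
      (hφ t ht)
    rwa [InnerProductSpace.toDual_apply_apply, hb, inner_neg_right, inner_add_right,
      real_inner_self_eq_norm_sq, real_inner_comm, hortho, add_zero] at h
  have hanti : AntitoneOn (fun t => f (φ t)) (Set.Ici 0) := by
    refine antitoneOn_of_hasDerivWithinAt_nonpos (convex_Ici 0)
      (fun t ht => (hF t ht).continuousAt.continuousWithinAt)
      (f' := fun t => -‖gradient f (φ t)‖ ^ 2) (fun t ht => ?_) (fun t _ => ?_)
    · exact (hF t (interior_subset ht)).hasDerivWithinAt
    · exact neg_nonpos.2 (sq_nonneg _)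
  obtain ⟨m, hm⟩ := (hK.image hf.continuous).bddBelow
  -- Freezing time at `0` for negative arguments turns the monotonicity on `[0, ∞)` into a global one.
  have hLim : ∃ L, Tendsto (fun t => f (φ t)) atTop (𝓝 L) := by
    have hanti' : Antitone fun t => f (φ (max t 0)) := fun s t hst =>
      hanti (le_max_right s 0) (le_max_right t 0) (max_le_max_right 0 hst)
    refine ⟨_, (tendsto_atTop_ciInf hanti' ⟨m, ?_⟩).congr' ?_⟩
    · rintro _ ⟨t, rfl⟩
      exact hm ⟨_, hφK _ (le_max_right t 0), rfl⟩
    · filter_upwards [eventually_ge_atTop 0] with t ht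
      rw [max_eq_left ht]
  obtain ⟨L, hL⟩ := hLim
  obtain ⟨C, hC⟩ := hK.exists_bound_of_continuousOn hbc.continuousOn
  have hφu : UniformContinuousOn φ (Set.Ici 0) := by
    refine LipschitzOnWith.uniformContinuousOn (K := C.toNNReal) ?_
    refine (convex_Ici (0 : ℝ)).lipschitzOnWith_of_nnnorm_hasDerivWithin_le
      (f' := fun t => b (φ t)) (fun t ht => (hφ t ht).hasDerivWithinAt) (fun t ht => ?_)
    rw [← norm_toNNReal]
    exact Real.toNNReal_le_toNNReal (hC _ (hφK t ht))
  have hGu : UniformContinuousOn (fun t => ‖gradient f (φ t)‖ ^ 2) (Set.Ici 0) :=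
    (hK.uniformContinuousOn_of_continuous hG.continuousOn).comp hφu fun t ht => hφK t ht
  have hzero : Tendsto (fun t => ‖gradient f (φ t)‖ ^ 2) atTop (𝓝 0) :=
    tendsto_zero_of_hasDerivAt_neg (F := fun t => f (φ t)) (g := fun t => ‖gradient f (φ t)‖ ^ 2)
      hF hL hGu fun t => sq_nonneg _
  have hcrit : ∀ z, MapClusterPt z atTop φ → gradient f z = 0 := by
    intro z hz
    have h1 : MapClusterPt (‖gradient f z‖ ^ 2) atTop fun t => ‖gradient f (φ t)‖ ^ 2 :=
      MapClusterPt.continuousAt_comp (f := fun x => ‖gradient f x‖ ^ 2) (u := φ)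
        hG.continuousAt hz
    have h2 : ‖gradient f z‖ ^ 2 = 0 := by
      have : (𝓝 (‖gradient f z‖ ^ 2) ⊓ 𝓝 (0 : ℝ)).NeBot :=
        NeBot.mono h1 (inf_le_inf_left _ hzero)
      exact eq_of_nhds_neBot this
    simpa using h2
  obtain ⟨y, -, hy⟩ := hK.exists_mapClusterPt_of_frequently (l := atTop) (f := φ)
    ((eventually_ge_atTop 0).mono hφK).frequently
  obtain ⟨ε, hε, hisoε⟩ := hiso y (hcrit y hy)
  refine ⟨y, hcrit y hy, Metric.tendsto_nhds.2 fun r hr => ?_⟩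
  have hr' : 0 < min r (ε / 2) := lt_min hr (half_pos hε)
  refine (eventually_dist_lt_of_no_mapClusterPt hK hφc hφK hy hr' fun z hz hzc => ?_).mono
    fun t ht => ht.trans_le (min_le_left _ _)
  refine hisoε z ?_ ?_ (hcrit z hzc)
  · rintro rfl
    rw [dist_self] at hz
    exact hr'.ne hz
  · rw [hz]
    exact (min_le_right _ _).trans_lt (half_lt_self hε)
end

section
/- For every absolutely continuous path φ : [t₁,t₂] → E, with derivative g, the action satisfies S_{t₁,t₂}(φ) = ½ ∫_{t₁}^{t₂} ‖g(s) − b(φ(s))‖² ds ≥ 2 (f(φ(t₂)) − f(φ(t₁))). -/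
/-!
Along the path, `f ∘ φ` is absolutely continuous: `f` is Lipschitz on the compact image of `φ`,
and the increments of `φ` are dominated by those of `t ↦ ∫ ‖g‖`. By Lebesgue differentiation and
the chain rule, `(f ∘ φ)' = ⟪∇f(φ), g⟫` almost everywhere, so
`f (φ t₂) - f (φ t₁) = ∫ ⟪∇f(φ), g⟫`. Since `ℓ ⊥ ∇f`, completing the square gives
`‖g - b(φ)‖² = ‖g + ∇f + ℓ‖² = ‖g - ∇f + ℓ‖² + 4 ⟪∇f, g⟫ ≥ 4 ⟪∇f, g⟫`,
and integrating this pointwise inequality proves the bound.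
-/

open MeasureTheory
open scoped RealInnerProductSpace ENNReal

/-- A map whose increments on `[a, b]` are dominated by a multiple of those of an absolutely
continuous map is absolutely continuous. -/
lemma AbsolutelyContinuousOnInterval.of_dist_le {X Y : Type*} [PseudoMetricSpace X]
    [PseudoMetricSpace Y] {h : ℝ → X} {G : ℝ → Y} {a b K : ℝ}
    (hG : AbsolutelyContinuousOnInterval G a b)
    (hle : ∀ x ∈ Set.uIcc a b, ∀ y ∈ Set.uIcc a b, dist (h x) (h y) ≤ K * dist (G x) (G y)) :
    AbsolutelyContinuousOnInterval h a b := by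
  have hG' := Filter.Tendsto.const_mul K hG
  rw [mul_zero] at hG'
  refine squeeze_zero' (.of_forall fun _ => Finset.sum_nonneg fun _ _ => dist_nonneg) ?_ hG'
  filter_upwards [Filter.mem_inf_of_right (Filter.mem_principal_self _)] with I hI
  rw [Finset.mul_sum]
  exact Finset.sum_le_sum fun i hi => hle _ (hI.1 i hi).1 _ (hI.1 i hi).2

/-- If `f` is `C¹` and `F` is an indefinite integral of `g`, then `f ∘ F` is absolutely
continuous. -/
lemma absolutelyContinuousOnInterval_comp_integral {E : Type*} [NormedAddCommGroup E]
    [NormedSpace ℝ E] [CompleteSpace E] {f : E → ℝ} (hf : ContDiff ℝ 1 f) {g : ℝ → E} {a b : ℝ}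
    (hg : IntervalIntegrable g volume a b) (x₀ : E) :
    AbsolutelyContinuousOnInterval (fun t => f (x₀ + ∫ s in a..t, g s)) a b := by
  have hsub : ∀ x ∈ Set.uIcc a b, IntervalIntegrable g volume a x := fun x hx =>
    hg.mono_set (Set.uIcc_subset_uIcc Set.left_mem_uIcc hx)
  have hcont : ContinuousOn (fun t => x₀ + ∫ s in a..t, g s) (Set.uIcc a b) :=
    continuousOn_const.add
      (intervalIntegral.continuousOn_primitive_interval
        ((intervalIntegrable_iff' (by simp)).1 hg))
  obtain ⟨K, hK⟩ := (hf.locallyLipschitz.locallyLipschitzOn).exists_lipschitzOnWith_of_compact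
    (isCompact_uIcc.image_of_continuousOn hcont)
  refine (hg.norm.absolutelyContinuousOnInterval_intervalIntegral (c := a)
    Set.left_mem_uIcc).of_dist_le (K := K) fun x hx y hy => ?_
  refine (hK.dist_le_mul _ (Set.mem_image_of_mem _ hx) _ (Set.mem_image_of_mem _ hy)).trans ?_
  gcongr
  rw [dist_add_left, dist_eq_norm, Real.dist_eq,
    intervalIntegral.integral_interval_sub_left (hsub x hx) (hsub y hy),
    intervalIntegral.integral_interval_sub_left (hsub x hx).norm (hsub y hy).norm]
  exact intervalIntegral.norm_integral_le_abs_integral_norm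

lemma ofReal_integral_le_lintegral_ofReal {α : Type*} [MeasurableSpace α] {μ : Measure α}
    {u : α → ℝ} (hu : Integrable u μ) :
    ENNReal.ofReal (∫ x, u x ∂μ) ≤ ∫⁻ x, ENNReal.ofReal (u x) ∂μ := by
  rw [integral_eq_lintegral_pos_part_sub_lintegral_neg_part hu]
  exact (ENNReal.ofReal_le_ofReal (sub_le_self _ ENNReal.toReal_nonneg)).trans
    ENNReal.ofReal_toReal_le

/-- Completing the square, with `n = ∇f` and `v` the velocity of the path. -/
lemma four_mul_inner_le_norm_sq {E : Type*} [NormedAddCommGroup E] [InnerProductSpace ℝ E]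
    {n l : E} (v : E) (h : ⟪l, n⟫ = 0) : 4 * ⟪n, v⟫ ≤ ‖v - -(n + l)‖ ^ 2 := by
  have h1 : ‖v - -(n + l)‖ ^ 2 = ‖v - n + l‖ ^ 2 + 4 * ⟪n, v⟫ := by
    simp only [← real_inner_self_eq_norm_sq, inner_add_left, inner_add_right, inner_sub_left,
      inner_sub_right, inner_neg_left, inner_neg_right, real_inner_comm n l,
      real_inner_comm n v, real_inner_comm l v]
    rw [real_inner_comm] at h
    linarith [real_inner_comm n l]
  nlinarith [sq_nonneg ‖v - n + l‖]

/-- **Lemma 2.2.** For every absolutely continuous path `φ : [t₁, t₂] → E` with derivative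
`g`, the action `S_{t₁,t₂}(φ) = ½ ∫ ‖g - b ∘ φ‖²` is at least `2 (f (φ t₂) - f (φ t₁))`,
where `b = -(∇f + ℓ)` and `ℓ ⊥ ∇f`.  (The action is taken in `ℝ≥0∞`, so it equals `+∞`
when the integral diverges.) -/
theorem stmt11 {d : ℕ}
    (f : EuclideanSpace ℝ (Fin d) → ℝ)
    (ℓ b : EuclideanSpace ℝ (Fin d) → EuclideanSpace ℝ (Fin d))
    (hf : ContDiff ℝ 1 f) (hl : Continuous ℓ)
    (hortho : ∀ x, ⟪ℓ x, gradient f x⟫ = 0)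
    (hb : b = fun x => -(gradient f x + ℓ x))
    (t₁ t₂ : ℝ) (ht : t₁ ≤ t₂)
    (φ g : ℝ → EuclideanSpace ℝ (Fin d))
    (hg : IntegrableOn g (Set.Icc t₁ t₂))
    (hφ : ∀ t ∈ Set.Icc t₁ t₂, φ t = φ t₁ + ∫ s in t₁..t, g s) :
    ENNReal.ofReal (2 * (f (φ t₂) - f (φ t₁))) ≤
      (∫⁻ s in Set.Icc t₁ t₂, ENNReal.ofReal (‖g s - b (φ s)‖ ^ 2)) / 2 := by
  have hgi : IntervalIntegrable g volume t₁ t₂ :=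
    (intervalIntegrable_iff_integrableOn_Icc_of_le ht).2 hg
  -- `φ` is only controlled on `[t₁, t₂]`; `h` replaces `f ∘ φ` by a function given on all of `ℝ`,
  -- so that two-sided derivatives can be used.
  set h : ℝ → ℝ := fun t => f (φ t₁ + ∫ s in t₁..t, g s) with hh
  have hac : AbsolutelyContinuousOnInterval h t₁ t₂ :=
    absolutelyContinuousOnInterval_comp_integral hf hgi _
  have hint : IntegrableOn (deriv h) (Set.Icc t₁ t₂) :=
    (intervalIntegrable_iff_integrableOn_Icc_of_le ht).1 hac.intervalIntegrable_deriv
  have hftc : 2 * (f (φ t₂) - f (φ t₁)) = ∫ s in Set.Icc t₁ t₂, 2 * deriv h s := by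
    rw [integral_const_mul, integral_Icc_eq_integral_Ioc, ← intervalIntegral.integral_of_le ht,
      hac.integral_deriv_eq_sub, hφ t₂ (Set.right_mem_Icc.2 ht)]
    simp [hh]
  rw [hftc, div_eq_mul_inv, ← lintegral_mul_const' _ _ (by simp)]
  refine (ofReal_integral_le_lintegral_ofReal (hint.const_mul 2)).trans
    (lintegral_mono_ae ?_)
  filter_upwards [ae_restrict_of_ae hgi.ae_hasDerivAt_integral,
    ae_restrict_mem measurableSet_Icc] with s hs hmem
  have hs' := hs (by rwa [Set.uIcc_of_le ht]) t₁ Set.left_mem_uIcc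
  have hderiv : deriv h s = ⟪gradient f (φ s), g s⟫ := by
    rw [hφ s hmem]
    have hgrad := ((hf.differentiable one_ne_zero
      (φ t₁ + ∫ u in t₁..s, g u)).hasGradientAt).hasFDerivAt
    have := hgrad.comp_hasDerivAt s (hs'.const_add (φ t₁))
    simpa [hh, Function.comp_def] using this.deriv
  have hle := four_mul_inner_le_norm_sq (g s) (hortho (φ s))
  have htwo (x : ℝ) : ENNReal.ofReal x / 2 = ENNReal.ofReal (x / 2) := by
    rw [ENNReal.ofReal_div_of_pos two_pos, ENNReal.ofReal_ofNat]
  rw [hderiv, hb, ← div_eq_mul_inv, htwo]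
  exact ENNReal.ofReal_le_ofReal (by linarith)
end

section
/- Let D ⊆ E and let ψ : [0,T] → E (T > 0) satisfy ψ'(t) = ∇f(ψ(t)) − ℓ(ψ(t)) for every t ∈ [0,T] (ψ is a trajectory of the time-reversed adjoint field ∇f − ℓ) with ψ([0,T]) contained in the closure of D. Then the quasi-potential satisfies V_{cl(D)}(ψ(0), ψ(T)) = 2 (f(ψ(T)) − f(ψ(0))). -/
/-!
Orthogonality lets one complete the square in the Lagrangian:
`‖φ' - b(φ)‖² = 4 ⟪∇f(φ), φ'⟫ + ‖φ' - (∇f - ℓ)(φ)‖²` (`lagrangian_eq`).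
Along an absolutely continuous path `⟪∇f(φ), φ'⟫` integrates to the increment of `f`
(`chain_ac`), so every admissible path from `ψ 0` to `ψ T` has action at least
`2 (f (ψ T) - f (ψ 0))`. The path `ψ` itself is admissible, and for it the extra square vanishes,
so it attains the bound.

The chain rule for an absolutely continuous path holds because `f ∘ φ` is again absolutely
continuous (`ac_comp_integral`), while Lebesgue differentiation gives its derivative
almost everywhere.
-/

open MeasureTheory
open scoped RealInnerProductSpace ENNReal

/-- The Freidlin–Wentzell action `S_{0,T}(φ) = ½ ∫_{[0,T]} ‖g(s) - b(φ(s))‖² ds ∈ [0,+∞]`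
of a path `φ` with derivative `g`. -/
noncomputable def pathEnergy {d : ℕ}
    (b : EuclideanSpace ℝ (Fin d) → EuclideanSpace ℝ (Fin d))
    (φ : ℝ → EuclideanSpace ℝ (Fin d)) (g : ℝ → EuclideanSpace ℝ (Fin d)) (T : ℝ) : ℝ≥0∞ :=
  (∫⁻ s in Set.Icc (0 : ℝ) T, ENNReal.ofReal (‖g s - b (φ s)‖ ^ 2)) / 2

/-- The quasi-potential `V_A(x, y) ∈ [0, +∞]`: the infimum of the action `S_{0,T}(φ)` over
all `T > 0` and all absolutely continuous paths `φ : [0,T] → A` (with integrable derivative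
`g`) such that `φ 0 = x` and `φ T = y`; it is `+∞` when no such path exists. -/
noncomputable def quasiPot {d : ℕ}
    (b : EuclideanSpace ℝ (Fin d) → EuclideanSpace ℝ (Fin d))
    (A : Set (EuclideanSpace ℝ (Fin d))) (x y : EuclideanSpace ℝ (Fin d)) : ℝ≥0∞ :=
  ⨅ (T : ℝ) (_ : 0 < T) (φ : ℝ → EuclideanSpace ℝ (Fin d)) (g : ℝ → EuclideanSpace ℝ (Fin d))
    (_ : IntegrableOn g (Set.Icc (0 : ℝ) T))
    (_ : ∀ t ∈ Set.Icc (0 : ℝ) T, φ t = x + ∫ s in (0 : ℝ)..t, g s)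
    (_ : ∀ t ∈ Set.Icc (0 : ℝ) T, φ t ∈ A)
    (_ : φ T = y),
    pathEnergy b φ g T

/-- Absolute continuity passes from `G` to any `F` whose increments are dominated by a constant
multiple of those of `G`. -/
lemma ac_of_dist_le {X Y : Type*} [PseudoMetricSpace X] [PseudoMetricSpace Y]
    {F : ℝ → X} {G : ℝ → Y} {a b K : ℝ}
    (hG : AbsolutelyContinuousOnInterval G a b)
    (h : ∀ s ∈ Set.uIcc a b, ∀ t ∈ Set.uIcc a b, dist (F s) (F t) ≤ K * dist (G s) (G t)) :
    AbsolutelyContinuousOnInterval F a b := by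
  unfold AbsolutelyContinuousOnInterval at hG ⊢
  refine squeeze_zero' (Filter.Eventually.of_forall fun _ => Finset.sum_nonneg fun _ _ =>
    dist_nonneg) ?_ (by simpa using hG.const_mul K)
  rw [Filter.eventually_inf_principal]
  refine Filter.Eventually.of_forall fun E hE => ?_
  rw [Finset.mul_sum]
  exact Finset.sum_le_sum fun i hi => h _ (hE.1 i hi).1 _ (hE.1 i hi).2

/-- A `C¹` function composed with an indefinite integral is absolutely continuous: it is Lipschitz
on a ball containing the path, and the increments of the path are at most those of
`t ↦ ∫₀ᵗ ‖g‖`. -/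
lemma ac_comp_integral {d : ℕ} {f : EuclideanSpace ℝ (Fin d) → ℝ} (hf : ContDiff ℝ 1 f)
    {T : ℝ} {g : ℝ → EuclideanSpace ℝ (Fin d)} (hg : IntervalIntegrable g volume 0 T)
    (x : EuclideanSpace ℝ (Fin d)) :
    AbsolutelyContinuousOnInterval (fun t => f (x + ∫ s in (0 : ℝ)..t, g s)) 0 T := by
  have hcont : ContinuousOn (fun t => x + ∫ s in (0 : ℝ)..t, g s) (Set.uIcc 0 T) :=
    continuousOn_const.add (intervalIntegral.continuousOn_primitive_interval'
      hg Set.left_mem_uIcc)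
  obtain ⟨R, hR⟩ := (isCompact_uIcc.image_of_continuousOn hcont).isBounded.subset_closedBall 0
  obtain ⟨K, hK⟩ := (hf.contDiffOn (s := Metric.closedBall 0 R)).exists_lipschitzOnWith one_ne_zero
    (convex_closedBall _ _) (isCompact_closedBall _ _)
  refine ac_of_dist_le (K := K)
    (hg.norm.absolutelyContinuousOnInterval_intervalIntegral Set.left_mem_uIcc) fun s hs t ht => ?_
  refine (hK.dist_le_mul _ (hR ⟨s, hs, rfl⟩) _ (hR ⟨t, ht, rfl⟩)).trans ?_
  have sub : ∀ u ∈ Set.uIcc 0 T, IntervalIntegrable g volume 0 u := fun u hu =>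
    hg.mono_set (Set.uIcc_subset_uIcc_left hu)
  gcongr
  rw [dist_add_left, dist_eq_norm, dist_eq_norm,
    intervalIntegral.integral_interval_sub_left (sub s hs) (sub t ht),
    intervalIntegral.integral_interval_sub_left (sub s hs).norm (sub t ht).norm]
  exact intervalIntegral.norm_integral_le_abs_integral_norm

/-- Fundamental theorem of calculus for `f ∘ φ`, with `f` of class `C¹` and `φ` absolutely
continuous with derivative `g`. -/
lemma chain_ac {d : ℕ} {f : EuclideanSpace ℝ (Fin d) → ℝ} (hf : ContDiff ℝ 1 f)
    {T : ℝ} (hT : 0 < T) {φ g : ℝ → EuclideanSpace ℝ (Fin d)} {x : EuclideanSpace ℝ (Fin d)}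
    (hg : IntegrableOn g (Set.Icc (0 : ℝ) T))
    (hφ : ∀ t ∈ Set.Icc (0 : ℝ) T, φ t = x + ∫ s in (0 : ℝ)..t, g s) :
    IntegrableOn (fun t => ⟪gradient f (φ t), g t⟫) (Set.Icc (0 : ℝ) T) ∧
    ∫ t in Set.Icc (0 : ℝ) T, ⟪gradient f (φ t), g t⟫ = f (φ T) - f x := by
  have hg' : IntervalIntegrable g volume 0 T :=
    (intervalIntegrable_iff_integrableOn_Icc_of_le hT.le).2 hg
  have hac := ac_comp_integral hf hg' x
  have hae : ∀ᵐ t, t ∈ Set.Icc (0 : ℝ) T →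
      deriv (fun t => f (x + ∫ s in (0 : ℝ)..t, g s)) t = ⟪gradient f (φ t), g t⟫ := by
    filter_upwards [hg'.ae_hasDerivAt_integral] with t ht htI
    have h1 := (ht (by rwa [Set.uIcc_of_le hT.le]) 0 Set.left_mem_uIcc).const_add x
    have h2 := (hf.differentiable one_ne_zero (x + ∫ s in (0 : ℝ)..t, g s)).hasFDerivAt
    have h3 := h2.comp_hasDerivAt t h1
    rw [hφ t htI]
    refine h3.deriv.trans ?_
    rw [gradient, InnerProductSpace.toDual_symm_apply]
  have hae' := (ae_restrict_iff' (μ := volume) (measurableSet_Icc (a := (0 : ℝ)) (b := T))).2 hae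
  have hint := (intervalIntegrable_iff_integrableOn_Icc_of_le hT.le).1 hac.intervalIntegrable_deriv
  refine ⟨hint.congr hae', ?_⟩
  rw [← integral_congr_ae hae', integral_Icc_eq_integral_Ioc,
    ← intervalIntegral.integral_of_le hT.le, hac.integral_deriv_eq_sub, hφ T ⟨hT.le, le_rfl⟩]
  simp

lemma ofReal_integral_le_lintegral {α : Type*} [MeasurableSpace α] {μ : Measure α} {h : α → ℝ}
    (hh : Integrable h μ) :
    ENNReal.ofReal (∫ a, h a ∂μ) ≤ ∫⁻ a, ENNReal.ofReal (h a) ∂μ := by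
  refine ENNReal.ofReal_le_of_le_toReal ?_
  rw [integral_eq_lintegral_pos_part_sub_lintegral_neg_part hh]
  exact sub_le_self _ ENNReal.toReal_nonneg

/-- Completing the square: by orthogonality of `l` and `v`, the Lagrangian `‖g + (v + l)‖²`
exceeds `4 ⟪v, g⟫` by `‖g - (v - l)‖²`. -/
lemma lagrangian_eq {E : Type*} [NormedAddCommGroup E] [InnerProductSpace ℝ E] {g v l : E}
    (h : ⟪l, v⟫ = 0) :
    ‖g - -(v + l)‖ ^ 2 = 4 * ⟪v, g⟫ + ‖g - (v - l)‖ ^ 2 := by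
  have e1 : g - -(v + l) = (g + l) + v := by abel
  have e2 : g - (v - l) = (g + l) - v := by abel
  rw [e1, e2, norm_add_sq_real, norm_sub_sq_real, inner_add_left, h, real_inner_comm]
  ring

/-- If `ψ : [0,T] → cl D` is a trajectory of the time-reversed adjoint field `∇f - ℓ`
contained in the closure of `D`, then the quasi-potential of `b = -(∇f + ℓ)` satisfies
`V_{cl D}(ψ 0, ψ T) = 2 (f (ψ T) - f (ψ 0))`. -/
theorem stmt12 {d : ℕ}
    (f : EuclideanSpace ℝ (Fin d) → ℝ)
    (ℓ b : EuclideanSpace ℝ (Fin d) → EuclideanSpace ℝ (Fin d))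
    (hf : ContDiff ℝ 1 f) (hl : Continuous ℓ)
    (hortho : ∀ x, ⟪ℓ x, gradient f x⟫ = 0)
    (hb : b = fun x => -(gradient f x + ℓ x))
    (D : Set (EuclideanSpace ℝ (Fin d)))
    (T : ℝ) (hT : 0 < T)
    (ψ : ℝ → EuclideanSpace ℝ (Fin d))
    (hψ : ∀ t ∈ Set.Icc (0 : ℝ) T, HasDerivAt ψ (gradient f (ψ t) - ℓ (ψ t)) t)
    (hψD : ∀ t ∈ Set.Icc (0 : ℝ) T, ψ t ∈ closure D) :
    quasiPot b (closure D) (ψ 0) (ψ T) = ENNReal.ofReal (2 * (f (ψ T) - f (ψ 0))) := by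
  have hgc : Continuous (gradient f) :=
    (InnerProductSpace.toDual ℝ _).symm.continuous.comp (hf.continuous_fderiv one_ne_zero)
  have half : ∀ r : ℝ, ENNReal.ofReal (2 * r) = ENNReal.ofReal (4 * r) / 2 := fun r => by
    rw [show (2 : ℝ≥0∞) = ENNReal.ofReal 2 by simp, ← ENNReal.ofReal_div_of_pos two_pos]
    congr 1; ring
  apply le_antisymm
  · have hψc : ContinuousOn ψ (Set.Icc 0 T) := fun t ht =>
      (hψ t ht).continuousAt.continuousWithinAt
    have hvc : ContinuousOn (fun t => gradient f (ψ t) - ℓ (ψ t)) (Set.Icc 0 T) :=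
      (hgc.comp_continuousOn hψc).sub (hl.comp_continuousOn hψc)
    have hv := hvc.integrableOn_Icc (μ := volume)
    have hψi : ∀ t ∈ Set.Icc (0 : ℝ) T,
        ψ t = ψ 0 + ∫ s in (0 : ℝ)..t, (gradient f (ψ s) - ℓ (ψ s)) := by
      intro t ht
      have hsub : Set.uIcc 0 t ⊆ Set.Icc 0 T := by
        rw [Set.uIcc_of_le ht.1]; exact Set.Icc_subset_Icc_right ht.2
      rw [intervalIntegral.integral_eq_sub_of_hasDerivAt (fun s hs => hψ s (hsub hs))
        (hvc.mono hsub).intervalIntegrable]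
      abel
    obtain ⟨hi, he⟩ := chain_ac hf hT hv hψi
    have hle : quasiPot b (closure D) (ψ 0) (ψ T) ≤
        pathEnergy b ψ (fun t => gradient f (ψ t) - ℓ (ψ t)) T :=
      iInf_le_of_le T <| iInf_le_of_le hT <| iInf_le_of_le ψ <|
      iInf_le_of_le (fun t => gradient f (ψ t) - ℓ (ψ t)) <| iInf_le_of_le hv <|
      iInf_le_of_le hψi <| iInf_le_of_le hψD <| iInf_le_of_le rfl le_rfl
    refine hle.trans ?_
    have hL : ∀ t, ‖gradient f (ψ t) - ℓ (ψ t) - b (ψ t)‖ ^ 2 =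
        4 * ⟪gradient f (ψ t), gradient f (ψ t) - ℓ (ψ t)⟫ := fun t => by
      rw [hb, lagrangian_eq (hortho _)]; simp
    rw [pathEnergy, half, ← he, ← integral_const_mul,
      ofReal_integral_eq_lintegral_ofReal (hi.const_mul 4)
        (Filter.Eventually.of_forall fun t => by
          simp only [Pi.zero_apply, ← hL]; positivity)]
    simp only [hL, le_refl]
  · refine le_iInf fun S => le_iInf fun hS => le_iInf fun φ => le_iInf fun g => le_iInf fun hg =>
      le_iInf fun hφ => le_iInf fun _ => le_iInf fun hend => ?_
    obtain ⟨hi, he⟩ := chain_ac hf hS hg hφ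
    rw [pathEnergy, half, ← hend, ← he, ← integral_const_mul]
    gcongr
    refine (ofReal_integral_le_lintegral (hi.const_mul 4)).trans (lintegral_mono fun t => ?_)
    refine ENNReal.ofReal_le_ofReal ?_
    rw [hb, lagrangian_eq (hortho _)]
    exact le_add_of_nonneg_right (sq_nonneg _)
end

section
/- If φ : [0,T] → E (T > 0) satisfies φ'(t) = ∇f(φ(t)) − ℓ(φ(t)) for every t ∈ [0,T], then its action equals exactly twice the energy gain: S_{0,T}(φ) = ½ ∫_{0}^{T} ‖φ'(s) − b(φ(s))‖² ds = 2 (f(φ(T)) − f(φ(0))). -/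
open MeasureTheory intervalIntegral
open scoped RealInnerProductSpace

/-!
Since `b = -(∇f + ℓ)`, the integrand is `‖2 ∇f(φ)‖² = 4 ‖∇f(φ)‖²`. By the chain rule and
orthogonality, `(f ∘ φ)' = ⟪∇f(φ), ∇f(φ) - ℓ(φ)⟫ = ‖∇f(φ)‖²`. The integrand is thus the continuous
derivative of `4 f ∘ φ`, and the fundamental theorem of calculus gives the value of the integral.
-/

/-- **Remark 2.1.** If `φ : [0,T] → E` is a trajectory of the time-reversed adjoint field
`∇f - ℓ` (with `ℓ ⊥ ∇f` and `b = -(∇f + ℓ)`), then its action equals exactly twice the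
energy gain: `½ ∫₀ᵀ ‖φ'(s) - b(φ(s))‖² ds = 2 (f (φ T) - f (φ 0))`. -/
theorem stmt19 {d : ℕ}
    (f : EuclideanSpace ℝ (Fin d) → ℝ)
    (ℓ b : EuclideanSpace ℝ (Fin d) → EuclideanSpace ℝ (Fin d))
    (hf : ContDiff ℝ 1 f) (hl : Continuous ℓ)
    (hortho : ∀ x, ⟪ℓ x, gradient f x⟫ = 0)
    (hb : b = fun x => -(gradient f x + ℓ x))
    (T : ℝ) (hT : 0 < T)
    (φ : ℝ → EuclideanSpace ℝ (Fin d))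
    (hφ : ∀ t ∈ Set.Icc (0 : ℝ) T, HasDerivAt φ (gradient f (φ t) - ℓ (φ t)) t) :
    (1 / 2) * ∫ s in (0 : ℝ)..T, ‖(gradient f (φ s) - ℓ (φ s)) - b (φ s)‖ ^ 2 =
      2 * (f (φ T) - f (φ 0)) := by
  subst hb
  have hφc : ContinuousOn φ (Set.Icc 0 T) := fun t ht => (hφ t ht).continuousAt.continuousWithinAt
  have hgc : Continuous (gradient f) :=
    (InnerProductSpace.toDual ℝ _).symm.continuous.comp (hf.continuous_fderiv one_ne_zero)
  have hderiv : ∀ t ∈ Set.uIcc 0 T,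
      HasDerivAt (fun s => 4 * f (φ s)) (4 * ‖gradient f (φ t)‖ ^ 2) t := by
    intro t ht
    rw [Set.uIcc_of_le hT.le] at ht
    have hgrad := ((hf.differentiable one_ne_zero) (φ t)).hasGradientAt.hasFDerivAt
    have hinner : ⟪gradient f (φ t), gradient f (φ t) - ℓ (φ t)⟫ = ‖gradient f (φ t)‖ ^ 2 := by
      rw [inner_sub_right, real_inner_self_eq_norm_sq, real_inner_comm, hortho, sub_zero]
    have h := (hgrad.comp_hasDerivAt t (hφ t ht)).const_mul 4
    rw [InnerProductSpace.toDual_apply_apply, hinner] at h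
    exact h
  have hint : IntervalIntegrable (fun s => 4 * ‖gradient f (φ s)‖ ^ 2) volume 0 T := by
    apply ContinuousOn.intervalIntegrable
    rw [Set.uIcc_of_le hT.le]
    exact continuousOn_const.mul ((hgc.comp_continuousOn hφc).norm.pow 2)
  -- Along `φ` the velocity minus the drift is `2 ∇f(φ)`, since the `ℓ` terms cancel.
  have hintegrand : ∀ s, ‖(gradient f (φ s) - ℓ (φ s)) - -(gradient f (φ s) + ℓ (φ s))‖ ^ 2 =
      4 * ‖gradient f (φ s)‖ ^ 2 := by
    intro s
    have h : (gradient f (φ s) - ℓ (φ s)) - -(gradient f (φ s) + ℓ (φ s)) =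
        (2 : ℝ) • gradient f (φ s) := by module
    rw [h, norm_smul, Real.norm_ofNat]
    ring
  simp only [hintegrand]
  rw [integral_eq_sub_of_hasDerivAt hderiv hint]
  ring
end
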